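/- arXiv:quant-ph/0408115 — 12 statements merged into one kernel-verified Lean document; each statement's English description precedes it below -/
import Mathlib

section
/- A POVM P with finite outcome set E on ℂ^d is extremal if and only if the only family D : E → M_d(ℂ) of Hermitian matrices satisfying ∑_{e∈E} D_e = 0 and range(D_e) ⊆ range(P_e) for every e ∈ E is the zero family. -/
/-!
A point of a convex set is extreme iff it cannot be moved both ways along a nonzero vector, so `P`
is extremal iff `D = 0` whenever both `P ± D` are POVMs. Such a `D` is Hermitian with sum zero, and
a vector killed by `2 P e = (P + D) e + (P - D) e` is killed by both positive semidefinite summands;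
hence `ker (P e) ≤ ker (D e)`, that is, `range (D e) ≤ range (P e)`.

Conversely, let `D` be a Hermitian matrix with `range D ≤ range P`, where `P = Bᴴ B`. A generalized
inverse `G` of `P`, that is `P G P = P`, gives `D = P N P` with `N = G D Gᴴ` Hermitian. Hence
`c P + D = Bᴴ (c + B N Bᴴ) B` is positive semidefinite for large `c`, so `P ± t D` stays positive
semidefinite for small `t > 0`.
-/

open Matrix
open scoped ComplexOrder

/-- A POVM with finite outcome set `E` on `ℂ^d`: a family of positive semidefinite
matrices summing to the identity. -/
def IsPOVM {d : ℕ} {E : Type*} [Fintype E] (P : E → Matrix (Fin d) (Fin d) ℂ) : Prop :=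
  (∀ e, (P e).PosSemidef) ∧ ∑ e, P e = 1

/-- A POVM is extremal if it is an extreme point of the convex set of POVMs
inside the real vector space of families `E → M_d(ℂ)`. -/
def IsExtremalPOVM {d : ℕ} {E : Type*} [Fintype E] (P : E → Matrix (Fin d) (Fin d) ℂ) : Prop :=
  P ∈ Set.extremePoints ℝ {Q : E → Matrix (Fin d) (Fin d) ℂ | IsPOVM Q}

open scoped Topology

lemma mem_extremePoints_iff_forall_add_sub_mem {𝕜 V : Type*} [Field 𝕜] [LinearOrder 𝕜]
    [IsStrictOrderedRing 𝕜] [AddCommGroup V] [Module 𝕜 V] {A : Set V} (hA : Convex 𝕜 A) {x : V} :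
    x ∈ A.extremePoints 𝕜 ↔ x ∈ A ∧ ∀ v, x + v ∈ A → x - v ∈ A → v = 0 := by
  rw [mem_extremePoints_iff_left]
  refine and_congr_right fun hx ↦ ⟨fun h v hadd hsub ↦ ?_, fun h y hy z hz ↦ ?_⟩
  · have hmid : x ∈ openSegment 𝕜 (x + v) (x - v) :=
      ⟨1 / 2, 1 / 2, by norm_num, by norm_num, by norm_num, by module⟩
    exact add_eq_left.mp (h _ hadd _ hsub hmid)
  · rintro ⟨a, b, ha, hb, hab, rfl⟩
    obtain rfl : b = 1 - a := eq_sub_of_add_eq' hab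
    set x := a • y + (1 - a) • z
    -- The displacements `a • (y - x)` and `(1 - a) • (z - x)` are opposite.
    have hadd : x + a • (y - x) ∈ A := by
      convert hA hx hy hb.le ha.le (sub_add_cancel 1 a) using 1
      module
    have hsub : x - a • (y - x) ∈ A := by
      convert hA hx hz ha.le hb.le hab using 1
      module
    have hzero := h _ hadd hsub
    exact sub_eq_zero.mp ((smul_eq_zero.mp hzero).resolve_left ha.ne')

lemma exists_linearMap_comp_comp_eq_self {K V W : Type*} [DivisionRing K] [AddCommGroup V]
    [Module K V] [AddCommGroup W] [Module K W] (f : V →ₗ[K] W) :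
    ∃ g : W →ₗ[K] V, f ∘ₗ g ∘ₗ f = f := by
  obtain ⟨s, hs⟩ := f.rangeRestrict.exists_rightInverse_of_surjective f.range_rangeRestrict
  obtain ⟨g, hg⟩ := s.exists_extend
  refine ⟨g, LinearMap.ext fun x ↦ ?_⟩
  have hgs : g (f x) = s (f.rangeRestrict x) := LinearMap.congr_fun hg (f.rangeRestrict x)
  have hfs : f (s (f.rangeRestrict x)) = f x :=
    congrArg Subtype.val (LinearMap.congr_fun hs (f.rangeRestrict x))
  simp only [LinearMap.comp_apply, hgs, hfs]

section GeneralizedInverse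

variable {m n k K : Type*} [Fintype m] [Fintype n]

lemma exists_matrix_mul_mul_eq_self [Field K] (A : Matrix m n K) :
    ∃ G : Matrix n m K, A * G * A = A := by
  classical
  obtain ⟨g, hg⟩ := exists_linearMap_comp_comp_eq_self A.toLin'
  refine ⟨LinearMap.toMatrix' g, toLin'.injective ?_⟩
  rw [toLin'_mul, toLin'_mul, toLin'_toMatrix', LinearMap.comp_assoc, hg]

lemma mul_mul_eq_of_range_mulVecLin_le [CommSemiring K] [Fintype k] {A : Matrix m n K}
    {G : Matrix n m K} {C : Matrix m k K} (hG : A * G * A = A)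
    (h : LinearMap.range C.mulVecLin ≤ LinearMap.range A.mulVecLin) : A * G * C = C := by
  refine ext_iff_mulVec.mpr fun x ↦ ?_
  obtain ⟨y, hy⟩ : ∃ y, A *ᵥ y = C *ᵥ x := h ⟨x, rfl⟩
  calc (A * G * C) *ᵥ x = (A * G * A) *ᵥ y := by simp only [← mulVec_mulVec, hy]
    _ = C *ᵥ x := by rw [hG, hy]

lemma mul_mul_eq_of_ker_mulVecLin_le [CommRing K] {A : Matrix m n K}
    {G : Matrix n m K} {C : Matrix k n K} (hG : A * G * A = A)
    (h : LinearMap.ker A.mulVecLin ≤ LinearMap.ker C.mulVecLin) : C * G * A = C := by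
  refine ext_iff_mulVec.mpr fun x ↦ ?_
  have hker : A *ᵥ (G *ᵥ (A *ᵥ x) - x) = 0 := by
    simp only [mulVec_sub, mulVec_mulVec, ← Matrix.mul_assoc, hG, sub_self]
  have hC : C *ᵥ (G *ᵥ (A *ᵥ x) - x) = 0 := h hker
  simpa only [mulVec_sub, mulVec_mulVec, ← Matrix.mul_assoc, sub_eq_zero] using hC

end GeneralizedInverse

section IsHermitian

variable {K n : Type*} [Field K] [StarRing K] [Fintype n]

lemma range_mulVecLin_le_of_ker_mulVecLin_le {A C : Matrix n n K} (hA : A.IsHermitian)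
    (hC : C.IsHermitian) (h : LinearMap.ker A.mulVecLin ≤ LinearMap.ker C.mulVecLin) :
    LinearMap.range C.mulVecLin ≤ LinearMap.range A.mulVecLin := by
  obtain ⟨G, hG⟩ := exists_matrix_mul_mul_eq_self A
  have hfactor : C = A * (C * G)ᴴ := by
    rw [← hA.eq, ← conjTranspose_mul, mul_mul_eq_of_ker_mulVecLin_le hG h, hC.eq]
  rw [hfactor, mulVecLin_mul]
  exact LinearMap.range_comp_le_range _ _

lemma exists_isHermitian_eq_mul_mul {A C : Matrix n n K} (hA : A.IsHermitian)
    (hC : C.IsHermitian) (h : LinearMap.range C.mulVecLin ≤ LinearMap.range A.mulVecLin) :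
    ∃ N : Matrix n n K, N.IsHermitian ∧ C = A * N * A := by
  obtain ⟨G, hG⟩ := exists_matrix_mul_mul_eq_self A
  have hleft : A * G * C = C := mul_mul_eq_of_range_mulVecLin_le hG h
  have hright : C * Gᴴ * A = C := by
    simpa only [conjTranspose_mul, hA.eq, hC.eq, Matrix.mul_assoc] using
      congrArg conjTranspose hleft
  refine ⟨G * C * Gᴴ, isHermitian_mul_mul_conjTranspose G hC, ?_⟩
  calc C = A * G * C := hleft.symm
    _ = A * G * (C * Gᴴ * A) := by rw [hright]
    _ = A * (G * C * Gᴴ) * A := by simp only [Matrix.mul_assoc]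

end IsHermitian

section PosSemidef

variable {𝕜 n : Type*} [RCLike 𝕜]

open scoped MatrixOrder in
lemma exists_posSemidef_smul_one_add [Finite n] [DecidableEq n] {N : Matrix n n 𝕜}
    (hN : N.IsHermitian) : ∃ c : ℝ, (c • (1 : Matrix n n 𝕜) + N).PosSemidef := by
  have := Fintype.ofFinite n
  obtain ⟨r, hr⟩ := (finite_real_spectrum (A := N)).bddBelow
  have hle : algebraMap ℝ (Matrix n n 𝕜) r ≤ N := algebraMap_le_of_le_spectrum hr hN
  refine ⟨-r, ?_⟩
  rwa [le_iff, Algebra.algebraMap_eq_smul_one, sub_eq_neg_add, ← neg_smul] at hle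

variable [Fintype n]

open scoped MatrixOrder in
lemma exists_posSemidef_smul_add {P D : Matrix n n 𝕜} (hP : P.PosSemidef) (hD : D.IsHermitian)
    (h : LinearMap.range D.mulVecLin ≤ LinearMap.range P.mulVecLin) :
    ∃ c : ℝ, (c • P + D).PosSemidef := by
  classical
  obtain ⟨N, hN, rfl⟩ := exists_isHermitian_eq_mul_mul hP.isHermitian hD h
  obtain ⟨B, rfl⟩ := CStarAlgebra.nonneg_iff_eq_star_mul_self.mp hP.nonneg
  obtain ⟨c, hc⟩ := exists_posSemidef_smul_one_add (isHermitian_mul_mul_conjTranspose B hN)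
  refine ⟨c, ?_⟩
  convert hc.conjTranspose_mul_mul_same B using 1
  simp only [star_eq_conjTranspose, Matrix.mul_add, Matrix.add_mul, Matrix.mul_smul,
    Matrix.smul_mul, Matrix.mul_one, Matrix.mul_assoc]

lemma eventually_posSemidef_add_smul {P D : Matrix n n 𝕜} (hP : P.PosSemidef)
    (hD : D.IsHermitian) (h : LinearMap.range D.mulVecLin ≤ LinearMap.range P.mulVecLin) :
    ∀ᶠ t in 𝓝[>] (0 : ℝ), (P + t • D).PosSemidef := by
  obtain ⟨c, hc⟩ := exists_posSemidef_smul_add hP hD h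
  have hlim : Filter.Tendsto (fun t : ℝ ↦ t * c) (𝓝[>] 0) (𝓝 0) :=
    tendsto_nhdsWithin_of_tendsto_nhds (by simpa using (continuous_mul_const c).tendsto 0)
  filter_upwards [hlim.eventually_le_const one_pos, self_mem_nhdsWithin] with t htc ht
  have hsplit : P + t • D = (1 - t * c) • P + t • (c • P + D) := by module
  rw [hsplit]
  exact (hP.smul (sub_nonneg.mpr htc)).add (hc.smul (le_of_lt ht))

lemma ker_mulVecLin_add_le_left {A B : Matrix n n 𝕜} (hA : A.PosSemidef) (hB : B.PosSemidef) :
    LinearMap.ker (A + B).mulVecLin ≤ LinearMap.ker A.mulVecLin := by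
  intro x hx
  have hsum : star x ⬝ᵥ (A *ᵥ x) + star x ⬝ᵥ (B *ᵥ x) = 0 := by
    rw [← dotProduct_add, ← add_mulVec, show (A + B) *ᵥ x = 0 from hx, dotProduct_zero]
  have hzero := (add_eq_zero_iff_of_nonneg (hA.dotProduct_mulVec_nonneg x)
    (hB.dotProduct_mulVec_nonneg x)).mp hsum
  exact (hA.dotProduct_mulVec_zero_iff x).mp hzero.1

lemma range_mulVecLin_le_of_posSemidef_add_sub {P D : Matrix n n 𝕜} (hP : P.IsHermitian)
    (hadd : (P + D).PosSemidef) (hsub : (P - D).PosSemidef) :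
    LinearMap.range D.mulVecLin ≤ LinearMap.range P.mulVecLin := by
  have hD : D.IsHermitian := by simpa using hadd.isHermitian.sub hP
  refine range_mulVecLin_le_of_ker_mulVecLin_le hP hD fun x (hx : P *ᵥ x = 0) ↦ ?_
  have hsum : ((P + D) + (P - D)) *ᵥ x = 0 := by
    rw [add_add_sub_cancel, add_mulVec, hx, add_zero]
  have haddx : (P + D) *ᵥ x = 0 := ker_mulVecLin_add_le_left hadd hsub hsum
  simpa [add_mulVec, hx] using haddx

end PosSemidef

section POVM

variable {d : ℕ} {E : Type*} [Fintype E] {P D : E → Matrix (Fin d) (Fin d) ℂ}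

lemma convex_setOf_isPOVM : Convex ℝ {Q : E → Matrix (Fin d) (Fin d) ℂ | IsPOVM Q} := by
  rintro Q ⟨hQ, hQsum⟩ R ⟨hR, hRsum⟩ a b ha hb hab
  refine ⟨fun e ↦ ((hQ e).smul ha).add ((hR e).smul hb), ?_⟩
  simp only [Pi.add_apply, Pi.smul_apply, Finset.sum_add_distrib, ← Finset.smul_sum, hQsum, hRsum,
    ← add_smul, hab, one_smul]

lemma isExtremalPOVM_iff_forall_add_sub (hP : IsPOVM P) :
    IsExtremalPOVM P ↔ ∀ D, IsPOVM (P + D) → IsPOVM (P - D) → D = 0 :=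
  (mem_extremePoints_iff_forall_add_sub_mem convex_setOf_isPOVM).trans (and_iff_right hP)

namespace IsPOVM

lemma eventually_add_smul (hP : IsPOVM P) (hD : ∀ e, (D e).IsHermitian) (hsum : ∑ e, D e = 0)
    (hrange : ∀ e, LinearMap.range (D e).mulVecLin ≤ LinearMap.range (P e).mulVecLin) :
    ∀ᶠ t in 𝓝[>] (0 : ℝ), IsPOVM (P + t • D) := by
  have hpos : ∀ᶠ t in 𝓝[>] (0 : ℝ), ∀ e, (P e + t • D e).PosSemidef :=
    Filter.eventually_all.mpr fun e ↦ eventually_posSemidef_add_smul (hP.1 e) (hD e) (hrange e)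
  filter_upwards [hpos] with t ht
  refine ⟨ht, ?_⟩
  simp only [Pi.add_apply, Pi.smul_apply, Finset.sum_add_distrib, ← Finset.smul_sum, hsum, hP.2,
    smul_zero, add_zero]

lemma exists_pos_add_sub_smul (hP : IsPOVM P) (hD : ∀ e, (D e).IsHermitian)
    (hsum : ∑ e, D e = 0)
    (hrange : ∀ e, LinearMap.range (D e).mulVecLin ≤ LinearMap.range (P e).mulVecLin) :
    ∃ t : ℝ, 0 < t ∧ IsPOVM (P + t • D) ∧ IsPOVM (P - t • D) := by
  have hneg : ∀ᶠ t in 𝓝[>] (0 : ℝ), IsPOVM (P + t • -D) :=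
    hP.eventually_add_smul (fun e ↦ (hD e).neg) (by simp [hsum])
      fun e ↦ by
        rintro _ ⟨x, rfl⟩
        exact hrange e ⟨-x, by simp [mulVec_neg]⟩
  obtain ⟨t, ht, hadd, hsub⟩ :=
    (eventually_mem_nhdsWithin.and ((hP.eventually_add_smul hD hsum hrange).and hneg)).exists
  exact ⟨t, ht, hadd, by rwa [smul_neg, ← sub_eq_add_neg] at hsub⟩

lemma sum_eq_zero_of_add (hP : IsPOVM P) (hadd : IsPOVM (P + D)) : ∑ e, D e = 0 := by
  simpa only [Pi.add_apply, Finset.sum_add_distrib, hP.2, add_eq_left] using hadd.2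

lemma isHermitian_of_add (hP : IsPOVM P) (hadd : IsPOVM (P + D)) (e : E) :
    (D e).IsHermitian := by
  simpa using (hadd.1 e).isHermitian.sub (hP.1 e).isHermitian

end IsPOVM

end POVM

theorem stmt2 {d : ℕ} (hd : 1 ≤ d) {E : Type*} [Fintype E]
    (P : E → Matrix (Fin d) (Fin d) ℂ) (hP : IsPOVM P) :
    IsExtremalPOVM P ↔
      ∀ D : E → Matrix (Fin d) (Fin d) ℂ,
        (∀ e, (D e).IsHermitian) → (∑ e, D e = 0) →
        (∀ e, LinearMap.range (D e).mulVecLin ≤ LinearMap.range (P e).mulVecLin) →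
        D = 0 := by
  rw [isExtremalPOVM_iff_forall_add_sub hP]
  constructor
  · intro hext D hD hsum hrange
    obtain ⟨t, ht, hadd, hsub⟩ := hP.exists_pos_add_sub_smul hD hsum hrange
    exact (smul_eq_zero.mp (hext _ hadd hsub)).resolve_left ht.ne'
  · intro h D hadd hsub
    exact h D (hP.isHermitian_of_add hadd) (hP.sum_eq_zero_of_add hadd) fun e ↦
      range_mulVecLin_le_of_posSemidef_add_sub (hP.1 e).isHermitian (hadd.1 e) (hsub.1 e)
end

section
/- Let P be a POVM with finite outcome set E on ℂ^d, and for each e ∈ E let (v^{(e)}_n)_{n=1,…,r_e}, with r_e = rank(P_e), be an orthonormal family of eigenvectors of P_e corresponding to its nonzero eigenvalues (hence an orthonormal basis of range(P_e)). Then P is extremal if and only if the rank-one matrices v^{(e)}_n (v^{(e)}_m)^†, for e ∈ E and 1 ≤ n, m ≤ r_e, are linearly independent over ℂ in M_d(ℂ). -/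
/-!
A Hermitian matrix `H` whose range lies in that of `A = B * Bᴴ` has the form `B * C * Bᴴ`, so
`A + t • H = B * (1 + t • C) * Bᴴ` stays positive semidefinite for small real `t`. Conversely, if
`A` is a proper convex combination of positive semidefinite matrices, their ranges lie in that
of `A`. Hence a POVM `P` is extremal iff the only family of Hermitian matrices `D e` with
`range (D e) ≤ range (P e)` and `∑ e, D e = 0` is zero.

For a basis `v e` of `range (P e)`, these families are the sums
`D e = ∑ i j, C e i j • v e i (v e j)†` with `C e` Hermitian and uniquely determined by `D e`. So
extremality says that no nonzero Hermitian coefficients `C` give a linear relation between the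
matrices `v e i (v e j)†`. The space of relations is closed under `C ↦ Cᴴ`, so it is then zero.
-/

open Matrix
open scoped ComplexOrder

section Range

variable {K m n : Type*} [Fintype m] [Fintype n]

/-- The witness `G` is a generalized inverse of `V`. -/
theorem exists_mul_mul_eq_of_range_le [Field K] {l : Type*} [Fintype l]
    {V : Matrix m n K} {B : Matrix m l K} (h : B.mulVecLin.range ≤ V.mulVecLin.range) :
    ∃ G : Matrix n m K, V * G * B = B := by
  classical
  obtain ⟨g, hg⟩ :=
    V.mulVecLin.rangeRestrict.exists_rightInverse_of_surjective V.mulVecLin.range_rangeRestrict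
  obtain ⟨G, hG⟩ := g.exists_extend
  refine ⟨LinearMap.toMatrix' G, ext_of_mulVec_single fun j => ?_⟩
  let y : V.mulVecLin.range := ⟨B *ᵥ Pi.single j 1, h ⟨_, rfl⟩⟩
  have hGy : G y = g y := LinearMap.congr_fun hG y
  have hVg : V *ᵥ g y = y := congrArg Subtype.val (LinearMap.congr_fun hg y)
  rw [← mulVec_mulVec, ← mulVec_mulVec, LinearMap.toMatrix'_mulVec]
  exact (congrArg (V *ᵥ ·) hGy).trans hVg

theorem exists_isHermitian_mul_mul_conjTranspose_eq [Field K] [StarRing K]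
    {V : Matrix m n K} {H : Matrix m m K} (hH : H.IsHermitian)
    (h : H.mulVecLin.range ≤ V.mulVecLin.range) :
    ∃ C : Matrix n n K, C.IsHermitian ∧ V * C * Vᴴ = H := by
  obtain ⟨G, hG⟩ := exists_mul_mul_eq_of_range_le h
  have hG' : H * (Gᴴ * Vᴴ) = H := by
    simpa only [conjTranspose_mul, hH.eq] using congrArg conjTranspose hG
  refine ⟨G * H * Gᴴ, isHermitian_mul_mul_conjTranspose G hH, ?_⟩
  calc V * (G * H * Gᴴ) * Vᴴ = V * G * H * (Gᴴ * Vᴴ) := by simp only [Matrix.mul_assoc]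
    _ = H := by rw [hG, hG']

theorem range_mulVecLin_mul_le [CommSemiring K] {l : Type*} (A : Matrix l m K) (B : Matrix m n K) :
    (A * B).mulVecLin.range ≤ A.mulVecLin.range := by
  rw [mulVecLin_mul]
  exact LinearMap.range_comp_le_range _ _

theorem range_mulVecLin_self_mul_conjTranspose [Field K] [PartialOrder K] [StarRing K]
    [StarOrderedRing K] (A : Matrix m n K) :
    (A * Aᴴ).mulVecLin.range = A.mulVecLin.range :=
  Submodule.eq_of_le_of_finrank_eq (range_mulVecLin_mul_le A Aᴴ) (rank_self_mul_conjTranspose A)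

end Range

open Filter Topology in
theorem eventually_nonneg_one_add_smul {A : Type*} [CStarAlgebra A] [PartialOrder A]
    [StarOrderedRing A] {a : A} (ha : IsSelfAdjoint a) : ∀ᶠ t : ℝ in 𝓝 0, 0 ≤ 1 + t • a := by
  have hlim : Tendsto (fun t : ℝ => ‖t • a‖) (𝓝 0) (𝓝 0) := by
    simpa using (continuous_id.smul (continuous_const (y := a))).norm.tendsto (0 : ℝ)
  filter_upwards [hlim.eventually_le_const one_pos] with t ht
  have hta : IsSelfAdjoint (t • a) := .smul (.all t) ha
  calc (0 : A) ≤ algebraMap ℝ A (1 - ‖t • a‖) := algebraMap_nonneg A (sub_nonneg.2 ht)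
    _ = 1 + -algebraMap ℝ A ‖t • a‖ := by rw [map_sub, map_one, sub_eq_add_neg]
    _ ≤ 1 + t • a := by gcongr; exact hta.neg_algebraMap_norm_le_self

section PosSemidef

variable {𝕜 n : Type*} [RCLike 𝕜] [Fintype n]

open scoped MatrixOrder Matrix.Norms.L2Operator in
theorem exists_eq_mul_conjTranspose_of_posSemidef {A : Matrix n n 𝕜} (hA : A.PosSemidef) :
    ∃ B : Matrix n n 𝕜, A = B * Bᴴ := by
  classical
  exact CStarAlgebra.nonneg_iff_eq_mul_star_self.mp hA.nonneg

theorem range_mulVecLin_le_range_add {A B : Matrix n n 𝕜} (hA : A.PosSemidef)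
    (hB : B.PosSemidef) : A.mulVecLin.range ≤ (A + B).mulVecLin.range := by
  obtain ⟨S, rfl⟩ := exists_eq_mul_conjTranspose_of_posSemidef hA
  obtain ⟨T, rfl⟩ := exists_eq_mul_conjTranspose_of_posSemidef hB
  have hsum : S * Sᴴ + T * Tᴴ = fromCols S T * (fromCols S T)ᴴ := by
    rw [conjTranspose_fromCols_eq_fromRows_conjTranspose, fromCols_mul_fromRows]
  rw [hsum, range_mulVecLin_self_mul_conjTranspose, range_mulVecLin_self_mul_conjTranspose]
  rintro _ ⟨x, rfl⟩
  exact ⟨Sum.elim x 0, by simp⟩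

theorem range_mulVecLin_le_range_smul_add_smul {A B : Matrix n n 𝕜} (hA : A.PosSemidef)
    (hB : B.PosSemidef) {a b : ℝ} (ha : 0 < a) (hb : 0 ≤ b) :
    A.mulVecLin.range ≤ (a • A + b • B).mulVecLin.range := by
  refine le_trans ?_ (range_mulVecLin_le_range_add (hA.smul ha.le) (hB.smul hb))
  rintro _ ⟨x, rfl⟩
  exact ⟨a⁻¹ • x, by simp [ha.ne']⟩

open scoped MatrixOrder Matrix.Norms.L2Operator Topology in
/-- Writing `A = B * Bᴴ` and `H = B * C * Bᴴ`, the perturbation is `B * (1 + t • C) * Bᴴ`. -/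
theorem eventually_posSemidef_add_smul_s3 {A H : Matrix n n ℂ} (hA : A.PosSemidef)
    (hH : H.IsHermitian) (hrange : H.mulVecLin.range ≤ A.mulVecLin.range) :
    ∀ᶠ t : ℝ in 𝓝 0, (A + t • H).PosSemidef := by
  classical
  obtain ⟨B, rfl⟩ := exists_eq_mul_conjTranspose_of_posSemidef hA
  rw [range_mulVecLin_self_mul_conjTranspose] at hrange
  obtain ⟨C, hC, rfl⟩ := exists_isHermitian_mul_mul_conjTranspose_eq hH hrange
  filter_upwards [eventually_nonneg_one_add_smul hC.isSelfAdjoint] with t ht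
  have h := (nonneg_iff_posSemidef.1 ht).mul_mul_conjTranspose_same B
  rwa [Matrix.mul_add, Matrix.add_mul, Matrix.mul_one, Matrix.mul_smul, Matrix.smul_mul] at h

end PosSemidef

theorem eq_zero_of_mem_extremePoints {𝕜 F : Type*} [Field 𝕜] [LinearOrder 𝕜]
    [IsStrictOrderedRing 𝕜] [AddCommGroup F] [Module 𝕜 F] {A : Set F} {x y : F}
    (hx : x ∈ A.extremePoints 𝕜) (hadd : x + y ∈ A) (hsub : x - y ∈ A) : y = 0 := by
  have hmem : x ∈ openSegment 𝕜 (x + y) (x - y) :=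
    ⟨1 / 2, 1 / 2, by norm_num, by norm_num, by norm_num, by module⟩
  simpa using hx.2 hadd hsub hmem

open scoped ComplexStarModule in
theorem submodule_eq_bot_of_star_mem {A : Type*} [AddCommGroup A] [Module ℂ A] [StarAddMonoid A]
    [StarModule ℂ A] {S : Submodule ℂ A} (hstar : ∀ a ∈ S, star a ∈ S)
    (hS : ∀ a ∈ S, IsSelfAdjoint a → a = 0) : S = ⊥ := by
  refine S.eq_bot_iff.2 fun a ha => ?_
  have hre : (ℜ a : A) = 0 := hS _ (by
    rw [realPart_apply_coe, ← Complex.coe_smul]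
    exact S.smul_mem _ (S.add_mem ha (hstar a ha))) (ℜ a).2
  have him : (ℑ a : A) = 0 := hS _ (by
    rw [imaginaryPart_apply_coe, ← Complex.coe_smul]
    exact S.smul_mem _ (S.smul_mem _ (S.sub_mem ha (hstar a ha)))) (ℑ a).2
  rw [← realPart_add_I_smul_imaginaryPart a, hre, him, smul_zero, add_zero]

section ConjSum

variable {E R n : Type*} [Fintype E] {ι : E → Type*} [∀ e, Fintype (ι e)]

/-- The linear map `C ↦ ∑ e, V e * C e * (V e)ᴴ`. If `V e` has the columns `v e i`, its values are
the linear combinations of the rank-one matrices `v e i (v e j)†`, the coefficients for each `e`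
being arranged in a square matrix `C e`. -/
def conjSum [CommSemiring R] [Star R] (V : (e : E) → Matrix n (ι e) R) :
    ((e : E) → Matrix (ι e) (ι e) R) →ₗ[R] Matrix n n R where
  toFun C := ∑ e, V e * C e * (V e)ᴴ
  map_add' C D := by
    simp only [Pi.add_apply, Matrix.mul_add, Matrix.add_mul, Finset.sum_add_distrib]
  map_smul' c C := by
    simp only [Pi.smul_apply, Matrix.mul_smul, Matrix.smul_mul, Finset.smul_sum, RingHom.id_apply]

theorem conjSum_apply [CommSemiring R] [Star R] (V : (e : E) → Matrix n (ι e) R)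
    (C : (e : E) → Matrix (ι e) (ι e) R) : conjSum V C = ∑ e, V e * C e * (V e)ᴴ :=
  rfl

theorem conjSum_star [CommSemiring R] [StarRing R] (V : (e : E) → Matrix n (ι e) R)
    (C : (e : E) → Matrix (ι e) (ι e) R) : conjSum V (star C) = (conjSum V C)ᴴ := by
  simp only [conjSum_apply, conjTranspose_sum, conjTranspose_mul, conjTranspose_conjTranspose,
    Pi.star_apply, star_eq_conjTranspose, Matrix.mul_assoc]

theorem sum_smul_vecMulVec_star {κ : Type*} [CommSemiring R] [Star R] [Fintype κ]
    (v : κ → n → R) (C : Matrix κ κ R) :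
    ∑ x : κ × κ, C x.1 x.2 • vecMulVec (v x.1) (star (v x.2)) = (of v)ᵀ * C * ((of v)ᵀ)ᴴ := by
  ext i j
  simp only [Matrix.sum_apply, Matrix.smul_apply, vecMulVec_apply, Matrix.mul_apply,
    Fintype.sum_prod_type_right, Finset.sum_mul, smul_eq_mul, Pi.star_apply, transpose_apply,
    conjTranspose_apply, of_apply]
  exact Finset.sum_congr rfl fun _ _ => Finset.sum_congr rfl fun _ _ => by ring

theorem linearIndependent_vecMulVec_iff_ker_conjSum_eq_bot [CommRing R] [Star R]
    (v : (e : E) → ι e → n → R) :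
    LinearIndependent R (fun x : Σ e, ι e × ι e =>
        vecMulVec (v x.1 x.2.1) (star (v x.1 x.2.2))) ↔
      (conjSum fun e => (of (v e))ᵀ).ker = ⊥ := by
  have hrel (C : (e : E) → Matrix (ι e) (ι e) R) :
      ∑ x : Σ e, ι e × ι e, C x.1 x.2.1 x.2.2 • vecMulVec (v x.1 x.2.1) (star (v x.1 x.2.2)) =
        conjSum (fun e => (of (v e))ᵀ) C := by
    rw [Fintype.sum_sigma, conjSum_apply]
    exact Finset.sum_congr rfl fun e _ => sum_smul_vecMulVec_star (v e) (C e)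
  rw [Fintype.linearIndependent_iff, LinearMap.ker_eq_bot']
  constructor
  · intro hind C hC
    ext e i j
    exact hind (fun x => C x.1 x.2.1 x.2.2) ((hrel C).trans hC) ⟨e, i, j⟩
  · intro hker c hc ⟨e, i, j⟩
    have hC := hker (fun e => of fun i j => c ⟨e, i, j⟩) ((hrel _).symm.trans hc)
    exact congrFun₂ (congrFun hC e) i j

theorem eq_zero_of_mul_eq_zero_of_linearIndependent_col {R m k l : Type*} [CommRing R]
    [Fintype k] {V : Matrix m k R} (hV : LinearIndependent R V.col) {B : Matrix k l R}
    (h : V * B = 0) : B = 0 := by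
  have hcol (j : l) : B.col j = 0 := mulVec_injective_iff.2 hV <| by
    rw [mulVec_zero]
    exact congrArg (col · j) h
  ext i j
  exact congrFun (hcol j) i

theorem eq_zero_of_mul_mul_conjTranspose_eq_zero {R m k : Type*} [CommRing R] [StarRing R]
    [Fintype k] {V : Matrix m k R} (hV : LinearIndependent R V.col)
    {C : Matrix k k R} (h : V * C * Vᴴ = 0) : C = 0 := by
  have hCV : C * Vᴴ = 0 :=
    eq_zero_of_mul_eq_zero_of_linearIndependent_col hV (by rwa [← Matrix.mul_assoc])
  have hVC : V * Cᴴ = 0 := by simpa using congrArg conjTranspose hCV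
  exact conjTranspose_eq_zero.1 (eq_zero_of_mul_eq_zero_of_linearIndependent_col hV hVC)

theorem ker_conjSum_eq_bot_iff [Fintype n] {V : (e : E) → Matrix n (ι e) ℂ}
    (hV : ∀ e, LinearIndependent ℂ (V e).col) :
    (conjSum V).ker = ⊥ ↔ ∀ D : E → Matrix n n ℂ, (∀ e, (D e).IsHermitian) →
      (∀ e, (D e).mulVecLin.range ≤ (V e).mulVecLin.range) → ∑ e, D e = 0 → D = 0 := by
  constructor
  · intro hker D hD hrange hsum
    choose C _ hC using fun e =>
      exists_isHermitian_mul_mul_conjTranspose_eq (hD e) (hrange e)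
    have hC0 : C = 0 := LinearMap.ker_eq_bot'.1 hker C (by simpa only [conjSum_apply, hC])
    ext1 e
    rw [← hC e, hC0, Pi.zero_apply, Matrix.mul_zero, Matrix.zero_mul, Pi.zero_apply]
  · intro h
    refine submodule_eq_bot_of_star_mem (fun C hC => ?_) fun C hC hsa => ?_
    · rw [LinearMap.mem_ker] at hC ⊢
      rw [conjSum_star, hC, conjTranspose_zero]
    · have hD := h (fun e => V e * C e * (V e)ᴴ)
        (fun e => isHermitian_mul_mul_conjTranspose _ (congrFun hsa e))
        (fun e => by rw [Matrix.mul_assoc]; exact range_mulVecLin_mul_le _ _) hC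
      ext1 e
      exact eq_zero_of_mul_mul_conjTranspose_eq_zero (hV e) (congrFun hD e)

end ConjSum

section POVM

variable {d : ℕ} {E : Type*} [Fintype E] {P : E → Matrix (Fin d) (Fin d) ℂ}

open Topology in
theorem IsPOVM.eventually_add_smul_s3 (hP : IsPOVM P) {D : E → Matrix (Fin d) (Fin d) ℂ}
    (hD : ∀ e, (D e).IsHermitian) (hrange : ∀ e, (D e).mulVecLin.range ≤ (P e).mulVecLin.range)
    (hsum : ∑ e, D e = 0) : ∀ᶠ t : ℝ in 𝓝 0, IsPOVM (P + t • D) := by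
  have hpos : ∀ᶠ t : ℝ in 𝓝 0, ∀ e, (P e + t • D e).PosSemidef :=
    Filter.eventually_all.2 fun e => eventually_posSemidef_add_smul_s3 (hP.1 e) (hD e) (hrange e)
  filter_upwards [hpos] with t ht
  refine ⟨ht, ?_⟩
  simp only [Pi.add_apply, Pi.smul_apply, Finset.sum_add_distrib, ← Finset.smul_sum, hsum, hP.2,
    smul_zero, add_zero]

open Topology in
theorem IsPOVM.isExtremalPOVM_iff (hP : IsPOVM P) :
    IsExtremalPOVM P ↔ ∀ D : E → Matrix (Fin d) (Fin d) ℂ, (∀ e, (D e).IsHermitian) →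
      (∀ e, (D e).mulVecLin.range ≤ (P e).mulVecLin.range) → ∑ e, D e = 0 → D = 0 := by
  constructor
  · intro hext D hD hrange hsum
    have hadd : ∀ᶠ t : ℝ in 𝓝 0, IsPOVM (P + t • D) := hP.eventually_add_smul_s3 hD hrange hsum
    have hsub : ∀ᶠ t : ℝ in 𝓝 0, IsPOVM (P + -t • D) :=
      (continuous_neg.tendsto' (0 : ℝ) 0 neg_zero).eventually hadd
    obtain ⟨t, ⟨htadd, htsub⟩, ht⟩ :=
      (((hadd.and hsub).filter_mono nhdsWithin_le_nhds).and
        (self_mem_nhdsWithin (s := {0}ᶜ))).exists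
    rw [neg_smul, ← sub_eq_add_neg] at htsub
    exact (smul_eq_zero.1 (eq_zero_of_mem_extremePoints hext htadd htsub)).resolve_left ht
  · intro h
    refine ⟨hP, fun Q hQ R hR ⟨a, b, ha, hb, _, hPab⟩ => sub_eq_zero.1 (h (Q - P) ?_ ?_ ?_)⟩
    · exact fun e => (hQ.1 e).isHermitian.sub (hP.1 e).isHermitian
    · intro e
      have hQP : (Q e).mulVecLin.range ≤ (P e).mulVecLin.range := by
        rw [← hPab]
        exact range_mulVecLin_le_range_smul_add_smul (hQ.1 e) (hR.1 e) ha hb.le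
      rintro _ ⟨x, rfl⟩
      rw [mulVecLin_apply, Pi.sub_apply, sub_mulVec]
      exact Submodule.sub_mem _ (hQP ⟨x, rfl⟩) ⟨x, rfl⟩
    · simp only [Pi.sub_apply, Finset.sum_sub_distrib, hQ.2, hP.2, sub_self]

end POVM

theorem linearIndependent_of_dotProduct_eq_ite {R ι n : Type*} [CommRing R] [Fintype n]
    [DecidableEq ι] {w v : ι → n → R} (hwv : ∀ i j, w i ⬝ᵥ v j = if i = j then 1 else 0) :
    LinearIndependent R v := by
  refine linearIndependent_iff'.2 fun s c hc i hi => ?_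
  have hdot : w i ⬝ᵥ ∑ j ∈ s, c j • v j = 0 := by rw [hc, dotProduct_zero]
  simpa [dotProduct_sum, hwv, hi] using hdot

theorem span_eq_range_of_eigenvectors {K M ι : Type*} [Field K] [AddCommGroup M] [Module K M]
    [Fintype ι] {T : Module.End K M} [FiniteDimensional K T.range] {v : ι → M}
    (hv : LinearIndependent K v) (heig : ∀ i, ∃ μ : K, μ ≠ 0 ∧ T (v i) = μ • v i)
    (hcard : Fintype.card ι = Module.finrank K T.range) :
    Submodule.span K (Set.range v) = T.range := by
  refine Submodule.eq_of_le_of_finrank_eq (Submodule.span_le.2 ?_)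
    ((finrank_span_eq_card hv).trans hcard)
  rintro _ ⟨i, rfl⟩
  obtain ⟨μ, hμ, hTv⟩ := heig i
  exact ⟨μ⁻¹ • v i, by rw [map_smul, hTv, inv_smul_smul₀ hμ]⟩

theorem stmt3_general {d : ℕ} {E : Type*} [Fintype E] (P : E → Matrix (Fin d) (Fin d) ℂ)
    (hP : IsPOVM P) {ι : E → Type*} (v : (e : E) → ι e → Fin d → ℂ)
    (hv : ∀ e, LinearIndependent ℂ (v e))
    (hspan : ∀ e, Submodule.span ℂ (Set.range (v e)) = (P e).mulVecLin.range) :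
    IsExtremalPOVM P ↔
      LinearIndependent ℂ (fun x : Σ e : E, ι e × ι e =>
        vecMulVec (v x.1 x.2.1) (star (v x.1 x.2.2))) := by
  have (e : E) : Fintype (ι e) := @Fintype.ofFinite _ (hv e).finite
  have hrange (e : E) : (of (v e))ᵀ.mulVecLin.range = (P e).mulVecLin.range :=
    (range_mulVecLin _).trans (hspan e)
  rw [hP.isExtremalPOVM_iff, linearIndependent_vecMulVec_iff_ker_conjSum_eq_bot,
    ker_conjSum_eq_bot_iff (V := fun e => (of (v e))ᵀ) hv]
  simp only [hrange]

theorem stmt3 {d : ℕ} (hd : 1 ≤ d) {E : Type*} [Fintype E]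
    (P : E → Matrix (Fin d) (Fin d) ℂ) (hP : IsPOVM P)
    (v : (e : E) → Fin (P e).rank → (Fin d → ℂ))
    (hON : ∀ e, ∀ n m, star (v e n) ⬝ᵥ v e m = if n = m then 1 else 0)
    (hEig : ∀ e n, ∃ μ : ℝ, μ ≠ 0 ∧ (P e) *ᵥ v e n = (μ : ℂ) • v e n) :
    IsExtremalPOVM P ↔
      LinearIndependent ℂ (fun x : Σ e : E, Fin (P e).rank × Fin (P e).rank =>
        vecMulVec (v x.1 x.2.1) (star (v x.1 x.2.2))) := by
  have hv e := linearIndependent_of_dotProduct_eq_ite (hON e)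
  exact stmt3_general P hP v hv fun e => span_eq_range_of_eigenvectors (hv e)
    (fun n => (hEig e n).imp' Complex.ofReal fun _ => And.imp_left Complex.ofReal_ne_zero.2)
    (Fintype.card_fin _)
end

section
/- Let P be a POVM with finite outcome set E on ℂ^d, and for each e ∈ E let Z_e be the orthogonal projection onto range(P_e). Then P is extremal if and only if the projections {Z_e}_{e∈E} are weakly independent, i.e., for every family T : E → M_d(ℂ), ∑_{e∈E} Z_e T_e Z_e = 0 implies Z_e T_e Z_e = 0 for all e ∈ E. -/
/-!
Moving from `P` in a direction `D` and in the direction `-D` stays among the POVMs exactly when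
`∑ D_e = 0` and `-P_e ≤ D_e ≤ P_e` for all `e`, so extremality says that such a `D` vanishes. The
order constraint is a support condition: `-P_e ≤ D_e ≤ P_e` forces `D_e = Z_e D_e Z_e`, and every
Hermitian matrix of the form `Z_e K Z_e` satisfies it after scaling by a small `ε > 0`. It only
remains to pass from Hermitian to arbitrary families, by real and imaginary parts.

The argument takes place in an arbitrary C⋆-algebra and for decompositions of an arbitrary element
in place of `1`; equality of ranges becomes equality of right ideals, `Z_e ∣ P_e` and `P_e ∣ Z_e`.
-/

open Matrix
open scoped ComplexOrder

section ExtremePoints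

variable {𝕜 V : Type*} [Field 𝕜] [LinearOrder 𝕜] [IsStrictOrderedRing 𝕜] [AddCommGroup V]
  [Module 𝕜 V]

lemma mem_extremePoints_iff_forall_add_mem_sub_mem {s : Set V} (hs : Convex 𝕜 s) {x : V} :
    x ∈ s.extremePoints 𝕜 ↔ x ∈ s ∧ ∀ v, x + v ∈ s → x - v ∈ s → v = 0 := by
  refine and_congr_right fun hx => ⟨fun h v hadd hsub => ?_, fun h y hy z hz hxyz => ?_⟩
  · have hmid : x ∈ openSegment 𝕜 (x + v) (x - v) :=
      ⟨1 / 2, 1 / 2, by norm_num, by norm_num, by norm_num, by module⟩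
    simpa using h hadd hsub hmid
  · obtain ⟨a, b, ha, hb, hab, hxab⟩ := hxyz
    have hbalance : a • (y - x) + b • (z - x) = 0 := by
      calc a • (y - x) + b • (z - x) = (a • y + b • z) - (a + b) • x := by module
        _ = 0 := by rw [hxab, hab, one_smul, sub_self]
    -- `x ± a • (y - x)` lie on the segments from `x` to `y` and to `z`.
    have hadd : x + a • (y - x) ∈ s := hs.add_smul_sub_mem hx hy ⟨ha.le, by linarith⟩
    have hsub : x - a • (y - x) ∈ s := by
      rw [sub_eq_add_neg, neg_eq_of_add_eq_zero_right hbalance]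
      exact hs.add_smul_sub_mem hx hz ⟨hb.le, by linarith⟩
    exact sub_eq_zero.1 ((smul_eq_zero.1 (h _ hadd hsub)).resolve_left ha.ne')

end ExtremePoints

/-- The families of positive elements, indexed by `E`, with sum `s`. For `s = 1` in a matrix
algebra these are the POVMs; for `s` a density matrix they are its ensembles. -/
def positiveDecompositions {A : Type*} [AddCommMonoid A] [Preorder A] (E : Type*) [Fintype E]
    (s : A) : Set (E → A) :=
  {p | (∀ e, 0 ≤ p e) ∧ ∑ e, p e = s}

section OrderedModule

variable {A : Type*} [AddCommGroup A] [PartialOrder A] [IsOrderedAddMonoid A] [Module ℝ A]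
  [PosSMulMono ℝ A]

section PositiveDecompositions

variable {E : Type*} [Fintype E] {s : A}

lemma convex_positiveDecompositions : Convex ℝ (positiveDecompositions E s) := by
  rintro p ⟨hp, hps⟩ q ⟨hq, hqs⟩ a b ha hb hab
  refine ⟨fun e => add_nonneg (smul_nonneg ha (hp e)) (smul_nonneg hb (hq e)), ?_⟩
  simp only [Pi.add_apply, Pi.smul_apply, Finset.sum_add_distrib, ← Finset.smul_sum, hps, hqs,
    ← add_smul, hab, one_smul]

lemma mem_extremePoints_positiveDecompositions_iff {p : E → A}
    (hp : p ∈ positiveDecompositions E s) :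
    p ∈ (positiveDecompositions E s).extremePoints ℝ ↔
      ∀ d : E → A, (∀ e, d e ∈ Set.Icc (-p e) (p e)) → ∑ e, d e = 0 → d = 0 := by
  rw [mem_extremePoints_iff_forall_add_mem_sub_mem convex_positiveDecompositions,
    and_iff_right hp]
  refine forall_congr' fun d => ?_
  have hmem : p + d ∈ positiveDecompositions E s ∧ p - d ∈ positiveDecompositions E s ↔
      (∀ e, d e ∈ Set.Icc (-p e) (p e)) ∧ ∑ e, d e = 0 := by
    simp only [positiveDecompositions, Set.mem_ofPred_eq, Pi.add_apply, Pi.sub_apply,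
      Finset.sum_add_distrib, Finset.sum_sub_distrib, hp.2, Set.mem_Icc, neg_le_iff_add_nonneg',
      sub_nonneg, add_eq_left, sub_eq_self, forall_and]
    tauto
  rw [← and_imp, ← and_imp, hmem]

end PositiveDecompositions

open Filter Topology in
lemma eventually_smul_mem_Icc_neg_self {x p : A} {c : ℝ} (hp : 0 ≤ p)
    (hx : x ∈ Set.Icc (-(c • p)) (c • p)) :
    ∀ᶠ ε : ℝ in 𝓝[>] 0, ε • x ∈ Set.Icc (-p) p := by
  have hsmall : ∀ᶠ ε : ℝ in 𝓝[>] 0, ε * c < 1 :=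
    nhdsWithin_le_nhds <|
      ((continuous_mul_const c).tendsto' 0 0 (zero_mul c)).eventually_lt_const one_pos
  filter_upwards [hsmall, self_mem_nhdsWithin] with ε hεc hε
  have hle : ε • c • p ≤ p := by
    rw [smul_smul, ← sub_nonneg]
    calc 0 ≤ (1 - ε * c) • p := smul_nonneg (sub_nonneg.2 hεc.le) hp
      _ = p - (ε * c) • p := by rw [sub_smul, one_smul]
  refine ⟨(neg_le_neg hle).trans ?_, ?_⟩
  · rw [← smul_neg]
    exact smul_le_smul_of_nonneg_left hx.1 (le_of_lt hε)
  · exact (smul_le_smul_of_nonneg_left hx.2 (le_of_lt hε)).trans hle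

end OrderedModule

section WeakIndependence

/-- Weak independence of a family `z` (of projections, in practice): the compressions
`z e * t e * z e` sum to zero only if they all vanish. -/
def WeaklyIndependent {A E : Type*} [NonUnitalNonAssocSemiring A] [Fintype E] (z : E → A) : Prop :=
  ∀ t : E → A, ∑ e, z e * t e * z e = 0 → ∀ e, z e * t e * z e = 0

variable {A : Type*} [NonUnitalRing A] [StarRing A] [Module ℂ A] [IsScalarTower ℂ A A]
  [SMulCommClass ℂ A A] [StarModule ℂ A]

open ComplexStarModule

lemma realPart_conjugate {z : A} (hz : IsSelfAdjoint z) (a : A) :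
    (ℜ (z * a * z) : A) = z * ℜ a * z := by
  simp [realPart_apply_coe, hz.star_eq, mul_add, add_mul, mul_assoc, mul_smul_comm,
    smul_mul_assoc]

lemma imaginaryPart_conjugate {z : A} (hz : IsSelfAdjoint z) (a : A) :
    (ℑ (z * a * z) : A) = z * ℑ a * z := by
  simp [imaginaryPart_apply_coe, hz.star_eq, mul_sub, sub_mul, mul_assoc, mul_smul_comm,
    smul_mul_assoc]

lemma weaklyIndependent_iff_forall_isSelfAdjoint {E : Type*} [Fintype E] {z : E → A}
    (hz : ∀ e, IsSelfAdjoint (z e)) :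
    WeaklyIndependent z ↔ ∀ t : E → A, (∀ e, IsSelfAdjoint (t e)) →
      ∑ e, z e * t e * z e = 0 → ∀ e, z e * t e * z e = 0 := by
  refine ⟨fun h t _ => h t, fun h t ht e => ?_⟩
  have hre : z e * ℜ (t e) * z e = 0 := by
    refine h (fun e => ℜ (t e)) (fun e => (ℜ (t e)).2) ?_ e
    simp only [← realPart_conjugate (hz _), ← AddSubmonoidClass.coe_finsetSum, ← map_sum, ht,
      map_zero, ZeroMemClass.coe_zero]
  have him : z e * ℑ (t e) * z e = 0 := by
    refine h (fun e => ℑ (t e)) (fun e => (ℑ (t e)).2) ?_ e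
    simp only [← imaginaryPart_conjugate (hz _), ← AddSubmonoidClass.coe_finsetSum, ← map_sum, ht,
      map_zero, ZeroMemClass.coe_zero]
  rw [← realPart_add_I_smul_imaginaryPart (z e * t e * z e), realPart_conjugate (hz e),
    imaginaryPart_conjugate (hz e), hre, him, smul_zero, add_zero]

end WeakIndependence

section CStarAlgebra

lemma mul_eq_zero_of_nonneg_of_le {A : Type*} [NonUnitalCStarAlgebra A] [PartialOrder A]
    [StarOrderedRing A] {a b c : A} (ha : 0 ≤ a) (hab : a ≤ b) (hbc : b * c = 0) :
    a * c = 0 := by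
  obtain ⟨r, rfl⟩ := CStarAlgebra.nonneg_iff_eq_star_mul_self.1 ha
  have hle : star c * (star r * r) * c ≤ 0 := by
    simpa only [mul_assoc, hbc, mul_zero] using star_left_conjugate_le_conjugate hab c
  have hrc : star (r * c) * (r * c) = 0 := by
    simpa only [star_mul, mul_assoc] using hle.antisymm (star_left_conjugate_nonneg ha c)
  rw [mul_assoc, (CStarRing.star_mul_self_eq_zero_iff _).1 hrc, mul_zero]

variable {A : Type*} [CStarAlgebra A] [PartialOrder A] [StarOrderedRing A]

lemma conjugate_eq_self_of_mem_Icc_neg_self {p z d : A} (hp : 0 ≤ p) (hz : IsStarProjection z)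
    (hzp : z ∣ p) (hd : d ∈ Set.Icc (-p) p) : z * d * z = d := by
  have hd_star : star d = d := by
    have hpd : IsSelfAdjoint (p - d) := .of_nonneg (sub_nonneg.2 hd.2)
    simpa using ((IsSelfAdjoint.of_nonneg hp).sub hpd).star_eq
  have hpz : p * (1 - z) = 0 := by
    obtain ⟨w, rfl⟩ := hzp
    have hleft : z * (z * w) = z * w := by rw [← mul_assoc, hz.isIdempotentElem.eq]
    have hright : z * w * z = z * w := by
      simpa only [star_mul _ (z * w), hz.isSelfAdjoint.star_eq,
        (IsSelfAdjoint.of_nonneg hp).star_eq] using congr(star $hleft)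
    rw [mul_sub, mul_one, hright, sub_self]
  have hdz : d * z = d := by
    have hadd : (p + d) * (1 - z) = 0 :=
      mul_eq_zero_of_nonneg_of_le (neg_le_iff_add_nonneg'.1 hd.1) (add_le_add_right hd.2 p)
        (by rw [add_mul, hpz, add_zero])
    rw [add_mul, hpz, zero_add, mul_sub, mul_one, sub_eq_zero] at hadd
    exact hadd.symm
  have hzd : z * d = d := by
    simpa [hz.isSelfAdjoint.star_eq, hd_star] using congr(star $hdz)
  rw [hzd, hdz]

lemma exists_conjugate_mem_Icc_smul {p z k : A} (hp : 0 ≤ p) (hz : IsSelfAdjoint z)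
    (hpz : p ∣ z) (hk : IsSelfAdjoint k) :
    ∃ c : ℝ, z * k * z ∈ Set.Icc (-(c • p)) (c • p) := by
  obtain ⟨w, hw⟩ := hpz
  obtain ⟨b, rfl⟩ := CStarAlgebra.nonneg_iff_eq_star_mul_self.1 hp
  set m := b * w * k * star (b * w) with hm_def
  have hm : IsSelfAdjoint m := hk.conjugate (b * w)
  have hzkz : z * k * z = star b * m * b := by
    calc z * k * z = z * k * star z := by rw [hz.star_eq]
      _ = star b * m * b := by simp only [hw, hm_def, star_mul, star_star, mul_assoc]
  rw [hzkz]
  refine ⟨‖m‖, neg_le.1 ?_, CStarAlgebra.star_left_conjugate_le_norm_smul hm⟩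
  simpa using CStarAlgebra.star_left_conjugate_le_norm_smul (a := b) hm.neg

theorem stmt4_general {E : Type*} [Fintype E] {s : A} {p z : E → A}
    (hp : p ∈ positiveDecompositions E s) (hz : ∀ e, IsStarProjection (z e))
    (hzp : ∀ e, z e ∣ p e) (hpz : ∀ e, p e ∣ z e) :
    p ∈ (positiveDecompositions E s).extremePoints ℝ ↔ WeaklyIndependent z := by
  rw [mem_extremePoints_positiveDecompositions_iff hp]
  constructor
  · rw [weaklyIndependent_iff_forall_isSelfAdjoint fun e => (hz e).isSelfAdjoint]
    intro hext t ht hsum e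
    choose c hc using fun e =>
      exists_conjugate_mem_Icc_smul (hp.1 e) (hz e).isSelfAdjoint (hpz e) (ht e)
    obtain ⟨ε, hmem, hε⟩ := ((Filter.eventually_all.2 fun e =>
      eventually_smul_mem_Icc_neg_self (hp.1 e) (hc e)).and self_mem_nhdsWithin).exists
    have hzero := hext (fun e => ε • (z e * t e * z e)) hmem
      (by rw [← Finset.smul_sum, hsum, smul_zero])
    exact (smul_eq_zero.1 (congrFun hzero e)).resolve_left (ne_of_gt hε)
  · intro hind d hd hsum
    have hzdz : ∀ e, z e * d e * z e = d e := fun e =>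
      conjugate_eq_self_of_mem_Icc_neg_self (hp.1 e) (hz e) (hzp e) (hd e)
    have hzero := hind d (by simpa only [hzdz] using hsum)
    exact funext fun e => (hzdz e).symm.trans (hzero e)

end CStarAlgebra

section Matrix

lemma range_mulVecLin_le_range_mulVecLin_iff {l m n R : Type*} [Fintype m] [Fintype n]
    [CommSemiring R] {M : Matrix l m R} {N : Matrix l n R} :
    LinearMap.range M.mulVecLin ≤ LinearMap.range N.mulVecLin ↔
      ∃ W : Matrix n m R, M = N * W := by
  classical
  constructor
  · intro h
    choose w hw using fun j => h ⟨Pi.single j 1, rfl⟩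
    refine ⟨(Matrix.of w)ᵀ, Matrix.ext_col fun j => ?_⟩
    exact (Matrix.mulVec_single_one M j).symm.trans (hw j).symm
  · rintro ⟨W, rfl⟩
    rw [Matrix.mulVecLin_mul]
    exact LinearMap.range_comp_le_range _ _

open scoped MatrixOrder

lemma isExtremalPOVM_iff {d : ℕ} {E : Type*} [Fintype E] {P : E → Matrix (Fin d) (Fin d) ℂ} :
    IsExtremalPOVM P ↔ P ∈ (positiveDecompositions E 1).extremePoints ℝ := by
  simp only [IsExtremalPOVM, IsPOVM, positiveDecompositions, Matrix.nonneg_iff_posSemidef]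

end Matrix

theorem stmt4 {d : ℕ} (hd : 1 ≤ d) {E : Type*} [Fintype E]
    (P : E → Matrix (Fin d) (Fin d) ℂ) (hP : IsPOVM P)
    (Z : E → Matrix (Fin d) (Fin d) ℂ)
    (hZherm : ∀ e, (Z e).IsHermitian) (hZidem : ∀ e, Z e * Z e = Z e)
    (hZrange : ∀ e, LinearMap.range (Z e).mulVecLin = LinearMap.range (P e).mulVecLin) :
    IsExtremalPOVM P ↔
      ∀ T : E → Matrix (Fin d) (Fin d) ℂ,
        (∑ e, Z e * T e * Z e = 0) → ∀ e, Z e * T e * Z e = 0 := by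
  open scoped MatrixOrder Matrix.Norms.L2Operator in
  exact isExtremalPOVM_iff.trans <| stmt4_general
    ⟨fun e => (hP.1 e).nonneg, hP.2⟩ (fun e => ⟨hZidem e, hZherm e⟩)
    (fun e => range_mulVecLin_le_range_mulVecLin_iff.1 (hZrange e).ge)
    (fun e => range_mulVecLin_le_range_mulVecLin_iff.1 (hZrange e).le)
end

section
/- If a POVM P with finite outcome set E on ℂ^d satisfies ∑_{e∈E} (rank P_e)² > d², then P is not extremal. -/
open Matrix
open scoped ComplexOrder

/-!
Write each effect as `P e = (B e)ᴴ * B e`. If `X` is a self-adjoint family of norm at most `1` with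
`∑ e, (B e)ᴴ * X e * B e = 0`, then `(B e)ᴴ * (1 ± X e) * B e` are two POVMs with midpoint `P`.
Extremality of `P` therefore forces `(B e)ᴴ * X e * B e = 0` for all `e`; by scaling and by passing
to real and imaginary parts, this holds for every complex family `X` with vanishing sum. In other
words, the ranges of the maps `X ↦ (B e)ᴴ * X * B e` are independent subspaces of `M_d(ℂ)`. Such a
map is the Kronecker product `(B e)ᴴ ⊗ (B e)ᵀ`, so its range has dimension `(rank (P e))²`, and
these dimensions add up to at most `d²`.
-/

section Dimension

open LinearMap Module
open scoped Kronecker TensorProduct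

lemma finrank_range_tensorProductMap {K V V' W W' : Type*} [Field K]
    [AddCommGroup V] [Module K V] [AddCommGroup V'] [Module K V']
    [AddCommGroup W] [Module K W] [AddCommGroup W'] [Module K W']
    (f : V →ₗ[K] V') (g : W →ₗ[K] W') :
    finrank K (range (TensorProduct.map f g)) = finrank K (range f) * finrank K (range g) := by
  rw [TensorProduct.range_map, ← TensorProduct.range_mapIncl,
    finrank_range_of_inj (TensorProduct.map_injective_of_flat_flat _ _
      (Submodule.subtype_injective _) (Submodule.subtype_injective _)), finrank_tensorProduct]

variable {R K l m n o : Type*} [Field K]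

lemma rank_kronecker [Finite l] [Fintype m] [Finite n] [Fintype o]
    (A : Matrix l m K) (B : Matrix n o K) : (A ⊗ₖ B).rank = A.rank * B.rank := by
  classical
  cases nonempty_fintype l
  cases nonempty_fintype n
  let bl := Pi.basisFun K l
  let bm := Pi.basisFun K m
  let bn := Pi.basisFun K n
  let bo := Pi.basisFun K o
  calc (A ⊗ₖ B).rank
      = finrank K (range (TensorProduct.map (toLin bm bl A) (toLin bo bn B))) := by
        rw [rank_eq_finrank_range_toLin _ (bl.tensorProduct bn) (bm.tensorProduct bo),
          toLin_kronecker]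
    _ = finrank K (range (toLin bm bl A)) * finrank K (range (toLin bo bn B)) :=
        finrank_range_tensorProductMap _ _
    _ = A.rank * B.rank := by rw [← rank_eq_finrank_range_toLin, ← rank_eq_finrank_range_toLin]

/-- Two-sided multiplication `X ↦ A * X * B`, the version of `LinearMap.mulLeftRight` for
rectangular matrices. For `A = Bᴴ`, its range consists of the directions in which the effect
`Bᴴ * B` of a POVM is perturbed. -/
def mulLeftRightLinearMap [CommSemiring R] [Fintype m] [Fintype n]
    (A : Matrix l m R) (B : Matrix n o R) : Matrix m n R →ₗ[R] Matrix l o R :=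
  mulRightLinearMap l R B ∘ₗ mulLeftLinearMap n R A

@[simp]
lemma mulLeftRightLinearMap_apply [CommSemiring R] [Fintype m] [Fintype n]
    (A : Matrix l m R) (B : Matrix n o R) (X : Matrix m n R) :
    mulLeftRightLinearMap A B X = A * X * B :=
  rfl

lemma toMatrix_mulLeftRightLinearMap [CommSemiring R] [Fintype l] [Fintype m]
    [DecidableEq m] [Fintype n] [DecidableEq n] [Finite o] (A : Matrix l m R) (B : Matrix n o R) :
    toMatrix (stdBasis R m n) (stdBasis R l o) (mulLeftRightLinearMap A B) = A ⊗ₖ Bᵀ := by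
  ext ⟨i, j⟩ ⟨k, p⟩
  calc toMatrix (stdBasis R m n) (stdBasis R l o) (mulLeftRightLinearMap A B) (i, j) (k, p)
      = (A * single k p (1 : R) * B) i j := by
        simp only [toMatrix_apply, stdBasis_eq_single]
        rfl
    _ = A i k * B p j := by
        simp [single_eq_single_vecMulVec_single, mul_vecMulVec, vecMulVec_mul, vecMulVec_apply]

lemma finrank_range_mulLeftRightLinearMap [Finite l] [Fintype m] [Fintype n] [Fintype o]
    (A : Matrix l m K) (B : Matrix n o K) :
    finrank K (range (mulLeftRightLinearMap A B)) = A.rank * B.rank := by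
  classical
  cases nonempty_fintype l
  rw [← rank_transpose B, ← rank_kronecker, ← toMatrix_mulLeftRightLinearMap,
    rank_eq_finrank_range_toLin _ (stdBasis K l o) (stdBasis K m n), toLin_toMatrix]

lemma sum_finrank_range_le_finrank {K ι W : Type*} {V : ι → Type*} [Field K] [Fintype ι]
    [∀ i, AddCommGroup (V i)] [∀ i, Module K (V i)]
    [AddCommGroup W] [Module K W] [FiniteDimensional K W] (f : ∀ i, V i →ₗ[K] W)
    (hf : ∀ x : ∀ i, V i, ∑ i, f i (x i) = 0 → ∀ i, f i (x i) = 0) :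
    ∑ i, finrank K (range (f i)) ≤ finrank K W := by
  let s : (∀ i, range (f i)) →ₗ[K] W := ∑ i, (range (f i)).subtype ∘ₗ proj i
  have hs : Function.Injective s := by
    refine (injective_iff_map_eq_zero s).2 fun y hy => ?_
    choose x hx using fun i => (y i).2
    ext i
    rw [← hx i]
    exact hf x (by simpa [s, hx] using hy) i
  simpa [finrank_pi_fintype] using finrank_le_finrank_of_injective hs

end Dimension

lemma eq_zero_of_mem_extremePoints_of_add_mem_of_sub_mem {V : Type*} [AddCommGroup V] [Module ℝ V]
    {S : Set V} {x y : V} (hx : x ∈ S.extremePoints ℝ) (hadd : x + y ∈ S) (hsub : x - y ∈ S) :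
    y = 0 :=
  add_eq_left.1 ((mem_extremePoints.1 hx).2 _ hadd _ hsub (mem_openSegment_add_sub x y)).1

open scoped ComplexStarModule in
lemma submodule_le_of_forall_isSelfAdjoint {V : Type*} [AddCommGroup V] [Module ℂ V]
    [StarAddMonoid V] [StarModule ℂ V] {K L : Submodule ℂ V} (hK : ∀ x ∈ K, star x ∈ K)
    (h : ∀ x ∈ K, IsSelfAdjoint x → x ∈ L) : K ≤ L := by
  intro x hx
  have hre : (ℜ x : V) ∈ K := by
    rw [realPart_apply_coe]
    exact K.smul_of_tower_mem (2 : ℝ)⁻¹ (K.add_mem hx (hK x hx))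
  have him : (ℑ x : V) ∈ K := by
    rw [imaginaryPart_apply_coe]
    exact K.smul_mem _ (K.smul_of_tower_mem (2 : ℝ)⁻¹ (K.sub_mem hx (hK x hx)))
  rw [← realPart_add_I_smul_imaginaryPart x]
  exact L.add_mem (h _ hre (ℜ x).2) (L.smul_mem _ (h _ him (ℑ x).2))

section Perturbation

open scoped Matrix.Norms.L2Operator MatrixOrder

lemma exists_eq_conjTranspose_mul_self_of_posSemidef {𝕜 n : Type*} [RCLike 𝕜] [Fintype n]
    {P : Matrix n n 𝕜} (hP : P.PosSemidef) : ∃ B : Matrix n n 𝕜, P = Bᴴ * B := by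
  classical
  exact CStarAlgebra.nonneg_iff_eq_star_mul_self.1 hP.nonneg

lemma posSemidef_one_add_of_norm_le_one {n : Type*} [Fintype n] [DecidableEq n]
    {X : Matrix n n ℂ} (hX : X.IsHermitian) (hnorm : ‖X‖ ≤ 1) : (1 + X).PosSemidef := by
  rw [← nonneg_iff_posSemidef, ← neg_le_iff_add_nonneg']
  calc -1 = -algebraMap ℝ (Matrix n n ℂ) 1 := by rw [map_one]
    _ ≤ -algebraMap ℝ (Matrix n n ℂ) ‖X‖ := neg_le_neg (algebraMap_mono _ hnorm)
    _ ≤ X := IsSelfAdjoint.neg_algebraMap_norm_le_self hX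

variable {d : ℕ} {E m : Type*} [Fintype E] [Fintype m]
  {B : E → Matrix m (Fin d) ℂ} {X : E → Matrix m m ℂ}

lemma IsPOVM.add_conjTranspose_mul_mul [DecidableEq m] (hP : IsPOVM fun e => (B e)ᴴ * B e)
    (hX : IsSelfAdjoint X) (hnorm : ‖X‖ ≤ 1) (hsum : ∑ e, (B e)ᴴ * X e * B e = 0) :
    IsPOVM ((fun e => (B e)ᴴ * B e) + fun e => (B e)ᴴ * X e * B e) := by
  refine ⟨fun e => ?_, ?_⟩
  · have hpos : (1 + X e).PosSemidef :=
      posSemidef_one_add_of_norm_le_one (congrFun hX e) ((norm_le_pi_norm X e).trans hnorm)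
    simpa [Matrix.mul_add, Matrix.add_mul] using hpos.conjTranspose_mul_mul_same (B e)
  · simp [Finset.sum_add_distrib, hP.2, hsum]

lemma IsExtremalPOVM.conjTranspose_mul_mul_eq_zero_of_isSelfAdjoint
    (hext : IsExtremalPOVM fun e => (B e)ᴴ * B e) (hX : IsSelfAdjoint X)
    (hsum : ∑ e, (B e)ᴴ * X e * B e = 0) (e : E) :
    (B e)ᴴ * X e * B e = 0 := by
  classical
  obtain rfl | hX0 := eq_or_ne X 0
  · simp
  have hpovm (t : ℝ) (ht : ‖t • X‖ ≤ 1) :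
      IsPOVM ((fun e => (B e)ᴴ * B e) + t • fun e => (B e)ᴴ * X e * B e) := by
    have htsum : ∑ e, (B e)ᴴ * (t • X) e * B e = 0 := by simp [← Finset.smul_sum, hsum]
    simpa [← Pi.smul_def] using hext.1.add_conjTranspose_mul_mul (.smul (.all t) hX) ht htsum
  let t : ℝ := ‖X‖⁻¹
  have ht : t ≠ 0 := inv_ne_zero (norm_ne_zero_iff.2 hX0)
  have hnorm : ‖t • X‖ ≤ 1 := by simp [t, norm_smul, hX0]
  have h0 : (t • fun e => (B e)ᴴ * X e * B e) = 0 :=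
    eq_zero_of_mem_extremePoints_of_add_mem_of_sub_mem hext (hpovm t hnorm) <| by
      simpa [sub_eq_add_neg] using hpovm (-t) (by simpa using hnorm)
  exact congrFun ((smul_eq_zero.1 h0).resolve_left ht) e

lemma IsExtremalPOVM.conjTranspose_mul_mul_eq_zero (hext : IsExtremalPOVM fun e => (B e)ᴴ * B e)
    (hsum : ∑ e, (B e)ᴴ * X e * B e = 0) (e : E) : (B e)ᴴ * X e * B e = 0 := by
  let f (e : E) : (E → Matrix m m ℂ) →ₗ[ℂ] Matrix (Fin d) (Fin d) ℂ :=
    mulLeftRightLinearMap (B e)ᴴ (B e) ∘ₗ LinearMap.proj e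
  have hstar (e : E) (Y : E → Matrix m m ℂ) : f e (star Y) = star (f e Y) := by
    simp [f, star_eq_conjTranspose, Matrix.mul_assoc]
  have hle : (∑ e, f e).ker ≤ (f e).ker := by
    refine submodule_le_of_forall_isSelfAdjoint (fun Y hY => ?_) fun Y hY hYsa => ?_
    · simpa [hstar, ← star_sum] using hY
    · exact hext.conjTranspose_mul_mul_eq_zero_of_isSelfAdjoint hYsa (by simpa [f] using hY) e
  exact hle (x := X) (by simpa [f] using hsum)

end Perturbation

theorem stmt5 {d : ℕ} (hd : 1 ≤ d) {E : Type*} [Fintype E]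
    (P : E → Matrix (Fin d) (Fin d) ℂ) (hP : IsPOVM P)
    (hrank : d ^ 2 < ∑ e, (P e).rank ^ 2) :
    ¬ IsExtremalPOVM P := by
  intro hext
  choose B hB using fun e => exists_eq_conjTranspose_mul_self_of_posSemidef (hP.1 e)
  obtain rfl : P = fun e => (B e)ᴴ * B e := funext hB
  let f e := mulLeftRightLinearMap (B e)ᴴ (B e)
  refine hrank.not_ge ?_
  calc ∑ e, ((B e)ᴴ * B e).rank ^ 2
      = ∑ e, Module.finrank ℂ (f e).range := by
        simp [f, finrank_range_mulLeftRightLinearMap, rank_conjTranspose_mul_self,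
          rank_conjTranspose, sq]
    _ ≤ Module.finrank ℂ (Matrix (Fin d) (Fin d) ℂ) :=
        sum_finrank_range_le_finrank f fun _ => hext.conjTranspose_mul_mul_eq_zero
    _ = d ^ 2 := by simp [Module.finrank_matrix, sq]
end

section
/- If P is an extremal POVM with finite outcome set E on ℂ^d such that the number of outcomes e with P_e ≠ 0 equals d², then every element of P has rank at most one. -/
open Matrix
open scoped ComplexOrder

/-!
Write `P e = (A e)ᴴ * A e`, where `A e` has `(P e).rank` rows, necessarily linearly independent.
If `X e` are Hermitian matrices with `∑ e, (A e)ᴴ * X e * A e = 0`, then for all small real `t` the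
matrices `(A e)ᴴ * (1 + t • X e) * A e` form a POVM, so extremality of `P` forces every `X e` to
vanish. Splitting into real and imaginary parts, the complex linear map
`X ↦ ∑ e, (A e)ᴴ * X e * A e` is injective, and comparing dimensions gives
`∑ e, (P e).rank ^ 2 ≤ d ^ 2`. If `P` has `d ^ 2` nonzero elements, each of them contributes at
least `1` to this sum, hence none contributes more.
-/

open Filter Topology
open scoped ComplexStarModule

lemma eq_zero_of_mem_extremePoints_of_eventually_add_smul_mem {V : Type*} [AddCommGroup V]
    [Module ℝ V] {s : Set V} {x v : V} (hx : x ∈ s.extremePoints ℝ)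
    (hv : ∀ᶠ t : ℝ in 𝓝 0, x + t • v ∈ s) : v = 0 := by
  have hv_neg : ∀ᶠ t : ℝ in 𝓝 0, x + (-t) • v ∈ s :=
    (continuous_neg.tendsto' (0 : ℝ) 0 neg_zero).eventually hv
  obtain ⟨t, ⟨hadd, hsub⟩, ht⟩ :=
    (((hv.and hv_neg).filter_mono nhdsWithin_le_nhds).and (self_mem_nhdsWithin (s := {0}ᶜ))).exists
  have hmid : x ∈ openSegment ℝ (x + t • v) (x + (-t) • v) :=
    ⟨1 / 2, 1 / 2, by norm_num, by norm_num, by norm_num, by module⟩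
  have htv : t • v = 0 := add_eq_left.1 (hx.2 hadd hsub hmid)
  exact (smul_eq_zero.1 htv).resolve_left ht

lemma injective_of_map_star_of_forall_isSelfAdjoint {V W : Type*} [AddCommGroup V] [Module ℂ V]
    [StarAddMonoid V] [StarModule ℂ V] [AddCommGroup W] [Module ℂ W] [StarAddMonoid W]
    {f : V →ₗ[ℂ] W} (hstar : ∀ x, f (star x) = star (f x))
    (hf : ∀ x, IsSelfAdjoint x → f x = 0 → x = 0) : Function.Injective f := by
  refine (injective_iff_map_eq_zero f).2 fun x hx => ?_
  have hstarx : f (star x) = 0 := by rw [hstar, hx, star_zero]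
  have hre : (ℜ x : V) = 0 := hf _ (ℜ x).2 <| by
    rw [realPart_apply_coe, LinearMap.map_smul_of_tower, map_add, hx, hstarx, add_zero, smul_zero]
  have him : (ℑ x : V) = 0 := hf _ (ℑ x).2 <| by
    rw [imaginaryPart_apply_coe, map_smul, LinearMap.map_smul_of_tower, map_sub, hx, hstarx,
      sub_zero, smul_zero, smul_zero]
  rw [← realPart_add_I_smul_imaginaryPart x, hre, him, smul_zero, add_zero]

section Rank

variable {K m n : Type*} [Field K] [Fintype n]

lemma rank_pos_of_ne_zero [Finite m] {A : Matrix m n K} (hA : A ≠ 0) : 0 < A.rank := by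
  classical
  refine Nat.pos_of_ne_zero fun hrank => hA ?_
  have hrange : A.mulVecLin.range = ⊥ := Submodule.finrank_eq_zero.1 hrank
  exact Matrix.toLin'.map_eq_zero_iff.1 (LinearMap.range_eq_bot.1 hrange)

variable [Fintype m] {A : Matrix m n K}

lemma exists_mul_eq_one_of_rank_eq_card [DecidableEq m] (hA : A.rank = Fintype.card m) :
    ∃ S : Matrix n m K, A * S = 1 := by
  have hrange : A.mulVecLin.range = ⊤ := Submodule.eq_top_of_finrank_eq <| by
    rw [Module.finrank_fintype_fun_eq_card, ← hA, Matrix.rank]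
  exact mulVec_surjective_iff_exists_right_inverse.1 (LinearMap.range_eq_top.1 hrange)

lemma eq_zero_of_conjTranspose_mul_mul_eq_zero [StarRing K] (hA : A.rank = Fintype.card m)
    {X : Matrix m m K} (hX : Aᴴ * X * A = 0) : X = 0 := by
  classical
  obtain ⟨S, hS⟩ := exists_mul_eq_one_of_rank_eq_card hA
  calc
    X = (A * S)ᴴ * X * (A * S) := by rw [hS, conjTranspose_one, Matrix.one_mul, Matrix.mul_one]
    _ = Sᴴ * (Aᴴ * X * A) * S := by simp only [conjTranspose_mul, Matrix.mul_assoc]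
    _ = 0 := by rw [hX, Matrix.mul_zero, Matrix.zero_mul]

end Rank

section PosSemidef

open scoped MatrixOrder Matrix.Norms.L2Operator in
lemma eventually_posSemidef_one_add_smul {n : Type*} [Finite n] [DecidableEq n]
    {X : Matrix n n ℂ} (hX : X.IsHermitian) : ∀ᶠ t : ℝ in 𝓝 0, (1 + t • X).PosSemidef := by
  have := Fintype.ofFinite n
  have hnorm : ∀ᶠ t : ℝ in 𝓝 0, ‖t • X‖ < 1 :=
    (continuous_id.smul continuous_const).norm.tendsto' 0 0 (by simp) |>.eventually_lt_const
      one_pos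
  filter_upwards [hnorm] with t ht
  have htX : IsSelfAdjoint (t • X) := (IsSelfAdjoint.all t).smul hX
  have hlower : -1 ≤ t • X := calc
    (-1 : Matrix n n ℂ) ≤ -algebraMap ℝ (Matrix n n ℂ) ‖t • X‖ :=
      neg_le_neg (by simpa using algebraMap_mono (Matrix n n ℂ) ht.le)
    _ ≤ t • X := htX.neg_algebraMap_norm_le_self
  rw [← nonneg_iff_posSemidef]
  exact neg_le_iff_add_nonneg'.1 hlower

lemma conjTranspose_mul_self_submatrix {R k m n : Type*} [NonUnitalNonAssocSemiring R]
    [StarRing R] [Fintype k] [Fintype m] (B : Matrix m n R) {f : k → m} (hf : f.Injective)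
    (hB : ∀ i ∉ Set.range f, B i = 0) :
    (B.submatrix f id)ᴴ * B.submatrix f id = Bᴴ * B := by
  ext i j
  simp only [mul_apply, conjTranspose_apply, submatrix_apply, id_eq]
  exact Fintype.sum_of_injective f hf _ _ (fun l hl => by simp [hB l hl]) fun _ => rfl

variable {𝕜 n : Type*} [RCLike 𝕜] [Fintype n] {P : Matrix n n 𝕜}

lemma exists_conjTranspose_mul_self_eq_and_row_eq_zero [DecidableEq n] (hP : P.PosSemidef) :
    ∃ B : Matrix n n 𝕜, Bᴴ * B = P ∧ ∀ i, hP.1.eigenvalues i = 0 → B i = 0 := by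
  let r : n → 𝕜 := fun i => (√(hP.1.eigenvalues i) : ℝ)
  let U : Matrix n n 𝕜 := hP.1.eigenvectorUnitary
  have hr : (diagonal r)ᴴ * diagonal r = diagonal (RCLike.ofReal ∘ hP.1.eigenvalues) := by
    rw [diagonal_conjTranspose, diagonal_mul_diagonal]
    congr 1
    ext i
    simp [r, ← RCLike.ofReal_mul, Real.mul_self_sqrt (hP.eigenvalues_nonneg i)]
  refine ⟨diagonal r * Uᴴ, ?_, fun i hi => ?_⟩
  · calc
      (diagonal r * Uᴴ)ᴴ * (diagonal r * Uᴴ) = U * ((diagonal r)ᴴ * diagonal r) * Uᴴ := by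
        simp only [conjTranspose_mul, conjTranspose_conjTranspose, Matrix.mul_assoc]
      _ = P := by
        rw [hr]
        exact hP.1.spectral_theorem.symm
  · ext j
    simp [r, hi]

lemma exists_fin_rank_conjTranspose_mul_self_eq (hP : P.PosSemidef) :
    ∃ A : Matrix (Fin P.rank) n 𝕜, Aᴴ * A = P := by
  classical
  obtain ⟨B, hBP, hB⟩ := exists_conjTranspose_mul_self_eq_and_row_eq_zero hP
  let σ : Fin P.rank ≃ {i // hP.1.eigenvalues i ≠ 0} :=
    (Fintype.equivFinOfCardEq hP.1.rank_eq_card_non_zero_eigs.symm).symm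
  refine ⟨B.submatrix (Subtype.val ∘ σ) id, ?_⟩
  rw [conjTranspose_mul_self_submatrix B (Subtype.val_injective.comp σ.injective), hBP]
  intro i hi
  rw [σ.surjective.range_comp] at hi
  exact hB i (not_not.1 fun hne => hi ⟨⟨i, hne⟩, rfl⟩)

end PosSemidef

section BlockCompression

variable {R E n : Type*} [CommSemiring R] [StarRing R] [Fintype E] {m : E → Type*}
  [∀ e, Fintype (m e)]

/-- The compression of the block diagonal matrix with blocks `X e` by the matrix with block rows
`A e`. Blocks are kept as a family, and may have different sizes. -/
def blockCompression (A : ∀ e, Matrix (m e) n R) :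
    (∀ e, Matrix (m e) (m e) R) →ₗ[R] Matrix n n R where
  toFun X := ∑ e, (A e)ᴴ * X e * A e
  map_add' X Y := by
    simp only [Pi.add_apply, Matrix.mul_add, Matrix.add_mul, Finset.sum_add_distrib]
  map_smul' c X := by
    simp only [Pi.smul_apply, Matrix.mul_smul, Matrix.smul_mul, Finset.smul_sum, RingHom.id_apply]

lemma blockCompression_apply (A : ∀ e, Matrix (m e) n R) (X : ∀ e, Matrix (m e) (m e) R) :
    blockCompression A X = ∑ e, (A e)ᴴ * X e * A e :=
  rfl

lemma blockCompression_star (A : ∀ e, Matrix (m e) n R) (X : ∀ e, Matrix (m e) (m e) R) :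
    blockCompression A (star X) = star (blockCompression A X) := by
  simp [blockCompression_apply, star_eq_conjTranspose, Matrix.mul_assoc]

end BlockCompression

section POVM

variable {d : ℕ} {E : Type*} [Fintype E] {P : E → Matrix (Fin d) (Fin d) ℂ} {m : E → Type*}
  [∀ e, Fintype (m e)] {A : ∀ e, Matrix (m e) (Fin d) ℂ}

lemma IsPOVM.eventually_add_smul_s6 (hP : IsPOVM P) (hA : ∀ e, (A e)ᴴ * A e = P e)
    {X : ∀ e, Matrix (m e) (m e) ℂ} (hX : ∀ e, (X e).IsHermitian)
    (hsum : blockCompression A X = 0) :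
    ∀ᶠ t : ℝ in 𝓝 0, IsPOVM (P + t • fun e => (A e)ᴴ * X e * A e) := by
  classical
  filter_upwards [eventually_all.2 fun e => eventually_posSemidef_one_add_smul (hX e)] with t ht
  refine ⟨fun e => ?_, ?_⟩
  · have hconj : (A e)ᴴ * (1 + t • X e) * A e = P e + t • ((A e)ᴴ * X e * A e) := by
      simp [Matrix.mul_add, Matrix.add_mul, hA e]
    change (P e + t • ((A e)ᴴ * X e * A e)).PosSemidef
    rw [← hconj]
    exact (ht e).conjTranspose_mul_mul_same (A e)
  · calc
      ∑ e, (P e + t • ((A e)ᴴ * X e * A e)) = ∑ e, P e + t • blockCompression A X := by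
        rw [Finset.sum_add_distrib, ← Finset.smul_sum, blockCompression_apply]
      _ = 1 := by rw [hP.2, hsum, smul_zero, add_zero]

lemma IsExtremalPOVM.blockCompression_injective (hP : IsExtremalPOVM P)
    (hA : ∀ e, (A e)ᴴ * A e = P e) (hrank : ∀ e, (A e).rank = Fintype.card (m e)) :
    Function.Injective (blockCompression A) := by
  refine injective_of_map_star_of_forall_isSelfAdjoint (blockCompression_star A) fun X hX hsum => ?_
  have hzero : (fun e => (A e)ᴴ * X e * A e) = 0 :=
    eq_zero_of_mem_extremePoints_of_eventually_add_smul_mem hP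
      (hP.1.eventually_add_smul_s6 hA (congrFun hX) hsum)
  exact funext fun e => eq_zero_of_conjTranspose_mul_mul_eq_zero (hrank e) (congrFun hzero e)

theorem IsExtremalPOVM.sum_rank_sq_le (hP : IsExtremalPOVM P) :
    ∑ e, (P e).rank ^ 2 ≤ d ^ 2 := by
  choose A hA using fun e => exists_fin_rank_conjTranspose_mul_self_eq (hP.1.1 e)
  have hrank : ∀ e, (A e).rank = Fintype.card (Fin (P e).rank) := fun e => by
    rw [← rank_conjTranspose_mul_self, hA, Fintype.card_fin]
  have hle := LinearMap.finrank_le_finrank_of_injective (hP.blockCompression_injective hA hrank)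
  simpa [Module.finrank_pi_fintype, Module.finrank_matrix, ← sq] using hle

end POVM

theorem stmt6 {d : ℕ} (hd : 1 ≤ d) {E : Type*} [Fintype E]
    (P : E → Matrix (Fin d) (Fin d) ℂ) (hP : IsPOVM P)
    (hext : IsExtremalPOVM P)
    (hcard : Fintype.card {e : E // P e ≠ 0} = d ^ 2) :
    ∀ e, (P e).rank ≤ 1 := by
  classical
  by_contra! ⟨e₀, he₀⟩
  have hcount : ∑ e, (if P e ≠ 0 then 1 else 0) = d ^ 2 := by
    rw [← hcard, Fintype.card_subtype, Finset.card_filter]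
  have hle : ∀ e, (if P e ≠ 0 then 1 else 0) ≤ (P e).rank ^ 2 := fun e => by
    split_ifs with he
    exacts [Nat.pow_pos (rank_pos_of_ne_zero he), Nat.zero_le _]
  have hlt : (if P e₀ ≠ 0 then 1 else 0) < (P e₀).rank ^ 2 := by
    split_ifs <;> nlinarith
  have hsum : d ^ 2 < ∑ e, (P e).rank ^ 2 :=
    hcount ▸ Finset.sum_lt_sum (fun e _ => hle e) ⟨e₀, Finset.mem_univ e₀, hlt⟩
  exact hsum.not_ge hext.sum_rank_sq_le
end

section
/- If P is an extremal POVM with finite outcome set E on ℂ^d, then the ranges of its elements are pairwise disjoint subspaces: for all e ≠ f in E, range(P_e) ∩ range(P_f) = {0}. -/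
open Matrix
open scoped ComplexOrder

/-!
Let `v = A w` with `A` positive semidefinite, and let `s = wᴴ A w`. The congruence of `A` by
`1 - l w vᴴ`, `l` real, is `A - l (2 - l s) v vᴴ`, so `A` stays positive semidefinite when a small
multiple of `v vᴴ` is added or subtracted. If `v` lies in the ranges of both `P e` and `P f`, a
small multiple of `v vᴴ` can therefore be moved from outcome `f` to outcome `e` or back, so that `P`
is the midpoint of a segment of POVMs. Extremality collapses the segment: `v vᴴ = 0`.
-/

open Filter Function Topology

section ExtremePoints

variable {𝕜 M : Type*} [Field 𝕜] [LinearOrder 𝕜] [IsStrictOrderedRing 𝕜] [TopologicalSpace 𝕜]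
  [OrderTopology 𝕜] [AddCommGroup M] [Module 𝕜 M]

lemma eq_zero_of_mem_extremePoints_of_eventually_add_smul_mem_s7 {A : Set M} {x d : M}
    (hx : x ∈ A.extremePoints 𝕜) (hd : ∀ᶠ t : 𝕜 in 𝓝 0, x + t • d ∈ A) : d = 0 := by
  have hd_neg : ∀ᶠ t : 𝕜 in 𝓝 0, x + -t • d ∈ A :=
    (continuous_neg.tendsto' 0 0 neg_zero).eventually hd
  obtain ⟨t, ⟨h_add, h_sub⟩, ht⟩ :=
    (((hd.and hd_neg).filter_mono nhdsWithin_le_nhds).and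
      (self_mem_nhdsWithin (s := Set.Ioi (0 : 𝕜)))).exists
  rw [neg_smul, ← sub_eq_add_neg] at h_sub
  have h_eq : x + t • d = x := hx.2 h_add h_sub (mem_openSegment_add_sub x (t • d))
  exact (smul_eq_zero.1 (add_eq_left.1 h_eq)).resolve_left (ne_of_gt ht)

lemma eq_zero_of_mem_extremePoints_sum_eq_of_eventually_add_smul_mem {E : Type*} [Fintype E]
    {C : Set M} {S : M} {P : E → M}
    (hP : P ∈ Set.extremePoints 𝕜 {Q : E → M | (∀ e, Q e ∈ C) ∧ ∑ e, Q e = S})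
    {e f : E} (hef : e ≠ f) {V : M} (he : ∀ᶠ t : 𝕜 in 𝓝 0, P e + t • V ∈ C)
    (hf : ∀ᶠ t : 𝕜 in 𝓝 0, P f + t • V ∈ C) : V = 0 := by
  classical
  let D : E → M := Pi.single e V - Pi.single f V
  have hD_sum : ∑ g, D g = 0 := by simp [D, Finset.sum_sub_distrib]
  have hf_neg : ∀ᶠ t : 𝕜 in 𝓝 0, P f + -t • V ∈ C :=
    (continuous_neg.tendsto' 0 0 neg_zero).eventually hf
  have hD_mem : ∀ g, ∀ᶠ t : 𝕜 in 𝓝 0, P g + t • D g ∈ C := by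
    intro g
    obtain rfl | hge := eq_or_ne g e
    · simpa [D, hef] using he
    obtain rfl | hgf := eq_or_ne g f
    · simpa [D, hge] using hf_neg
    · simpa [D, hge, hgf] using hP.1.1 g
  have hD : D = 0 := by
    refine eq_zero_of_mem_extremePoints_of_eventually_add_smul_mem_s7 hP ?_
    filter_upwards [eventually_all.2 hD_mem] with t ht
    refine ⟨ht, ?_⟩
    simp only [Pi.add_apply, Pi.smul_apply, Finset.sum_add_distrib, ← Finset.smul_sum, hD_sum,
      smul_zero, add_zero, hP.1.2]
  simpa [D, hef] using congrFun hD e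

end ExtremePoints

section PosSemidef

variable {n : Type*} [Fintype n]

lemma posSemidef_sub_smul_vecMulVec_mulVec {R : Type*} [CommRing R] [PartialOrder R]
    [StarRing R] {A : Matrix n n R} (hA : A.PosSemidef) (w : n → R) {l : R}
    (hl : IsSelfAdjoint l) :
    (A - (l * (2 - l * (star w ⬝ᵥ A *ᵥ w))) •
      vecMulVec (A *ᵥ w) (star (A *ᵥ w))).PosSemidef := by
  classical
  set v := A *ᵥ w with hv
  set s := star w ⬝ᵥ v
  have hwA : star w ᵥ* A = star v := by rw [hv, star_mulVec, hA.isHermitian.eq]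
  have hvw : star v ⬝ᵥ w = s := by rw [← hwA, ← dotProduct_mulVec]
  have h_left : (1 - l • vecMulVec w (star v))ᴴ * A = A - l • vecMulVec v (star v) := by
    rw [conjTranspose_sub, conjTranspose_one, conjTranspose_smul, conjTranspose_vecMulVec,
      star_star, sub_mul, one_mul, smul_mul_assoc, vecMulVec_mul, hwA, hl.star_eq]
  have h_congr : (1 - l • vecMulVec w (star v))ᴴ * A * (1 - l • vecMulVec w (star v)) =
      A - (l * (2 - l * s)) • vecMulVec v (star v) := by
    rw [h_left, mul_sub, mul_one, sub_mul, mul_smul_comm, mul_vecMulVec, ← hv, smul_mul_assoc,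
      mul_smul_comm, vecMulVec_mul_vecMulVec, hvw, vecMulVec_smul]
    module
  rw [← h_congr]
  exact hA.conjTranspose_mul_mul_same _

variable {𝕜 : Type*} [RCLike 𝕜]

lemma eventually_posSemidef_add_smul_vecMulVec {A : Matrix n n 𝕜} (hA : A.PosSemidef)
    {v : n → 𝕜} (hv : v ∈ LinearMap.range A.mulVecLin) :
    ∀ᶠ t : ℝ in 𝓝 0, (A + t • vecMulVec v (star v)).PosSemidef := by
  obtain ⟨w, rfl⟩ := hv
  rw [mulVecLin_apply]
  set V := vecMulVec (A *ᵥ w) (star (A *ᵥ w))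
  have hV : V.PosSemidef := posSemidef_vecMulVec_self_star _
  obtain ⟨s, -, hs⟩ := RCLike.nonneg_iff_exists_ofReal.1 (hA.dotProduct_mulVec_nonneg w)
  have h_small : ∀ᶠ t : ℝ in 𝓝 0, 0 < 1 + t * s :=
    (Continuous.tendsto' (by fun_prop) 0 1 (by simp)).eventually (lt_mem_nhds one_pos)
  filter_upwards [h_small] with t ht
  obtain ht0 | ht0 := le_total 0 t
  · exact hA.add (hV.smul ht0)
  · have h_sub : (A - (-t * (2 - -t * s)) • V).PosSemidef := by
      have h_congr := posSemidef_sub_smul_vecMulVec_mulVec hA w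
        (l := ((-t : ℝ) : 𝕜)) (RCLike.conj_ofReal _)
      rw [← hs] at h_congr
      rw [RCLike.real_smul_eq_coe_smul (K := 𝕜)]
      exact_mod_cast h_congr
    have h_split : A + t • V = (A - (-t * (2 - -t * s)) • V) + (-t * (1 + t * s)) • V := by
      module
    rw [h_split]
    exact h_sub.add (hV.smul (mul_nonneg (neg_nonneg.2 ht0) ht.le))

theorem stmt7_general {E : Type*} [Fintype E] {S : Matrix n n 𝕜} {P : E → Matrix n n 𝕜}
    (hP : P ∈ Set.extremePoints ℝ
      {Q : E → Matrix n n 𝕜 | (∀ e, (Q e).PosSemidef) ∧ ∑ e, Q e = S}) :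
    Pairwise (Disjoint on fun e ↦ LinearMap.range (P e).mulVecLin) := by
  intro e f hef
  rw [Function.onFun, Submodule.disjoint_def]
  intro v hve hvf
  have hv : vecMulVec v (star v) = 0 :=
    eq_zero_of_mem_extremePoints_sum_eq_of_eventually_add_smul_mem (C := {A | A.PosSemidef}) hP hef
      (eventually_posSemidef_add_smul_vecMulVec (hP.1.1 e) hve)
      (eventually_posSemidef_add_smul_vecMulVec (hP.1.1 f) hvf)
  simpa [vecMulVec_eq_zero] using hv

end PosSemidef

theorem stmt7 {d : ℕ} (hd : 1 ≤ d) {E : Type*} [Fintype E]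
    (P : E → Matrix (Fin d) (Fin d) ℂ) (hP : IsPOVM P)
    (hext : IsExtremalPOVM P) :
    ∀ e f : E, e ≠ f →
      LinearMap.range (P e).mulVecLin ⊓ LinearMap.range (P f).mulVecLin = ⊥ :=
  fun _ _ hef ↦ (stmt7_general hext hef).eq_bot
end

section
/- Every orthogonal POVM is extremal: if P : E → M_d(ℂ) is a family of orthogonal projections (each P_e is Hermitian and idempotent) with ∑_{e∈E} P_e = I, then P is an extremal POVM. -/
/-!
In a unital C⋆-algebra the projections are the extreme points of the operator interval `[0, 1]`.
The extreme points of a product of intervals are computed componentwise, so a family of projections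
is extreme among all families with values in `[0, 1]`. The effects of a POVM lie in `[0, 1]`, being
positive with sum `1`, and a point that is extreme in a set is extreme in every subset containing
it.
-/

open Matrix
open scoped ComplexOrder

section CStarAlgebra

variable {A : Type*} [CStarAlgebra A] [PartialOrder A] [StarOrderedRing A]

theorem Icc_zero_one_eq_nonneg_inter_closedBall :
    Set.Icc (0 : A) 1 = {a | 0 ≤ a} ∩ Metric.closedBall 0 1 := by
  ext a
  rw [Set.mem_inter_iff, mem_closedBall_zero_iff]
  exact and_congr_right fun ha => (CStarAlgebra.norm_le_one_iff_of_nonneg a ha).symm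

theorem isStarProjection_iff_mem_extremePoints_Icc {p : A} :
    IsStarProjection p ↔ p ∈ (Set.Icc (0 : A) 1).extremePoints ℝ := by
  rw [Icc_zero_one_eq_nonneg_inter_closedBall]
  exact isStarProjection_iff_mem_extremePoints_setOfPred_nonneg_inter_unitClosedBall

end CStarAlgebra

section ResolutionsOfUnity

/-- The positive resolutions of unity in `A` indexed by `E`: the POVMs with outcome set `E` and
effects in an ordered algebra `A`, which for `A = M_d(ℂ)` are those of `IsPOVM`. -/
def positiveResolutionsOfUnity (A E : Type*) [AddCommMonoid A] [One A] [LE A] [Fintype E] :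
    Set (E → A) :=
  {Q | (∀ e, 0 ≤ Q e) ∧ ∑ e, Q e = 1}

variable {A E : Type*} [Fintype E]

theorem positiveResolutionsOfUnity_subset_pi_Icc [AddCommMonoid A] [One A] [PartialOrder A]
    [IsOrderedAddMonoid A] :
    positiveResolutionsOfUnity A E ⊆ Set.univ.pi fun _ => Set.Icc 0 1 :=
  fun _ ⟨hnonneg, hsum⟩ e _ =>
    ⟨hnonneg e, hsum ▸ Finset.single_le_sum (fun i _ => hnonneg i) (Finset.mem_univ e)⟩

theorem stmt8_general [CStarAlgebra A] [PartialOrder A] [StarOrderedRing A] {P : E → A}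
    (hproj : ∀ e, IsStarProjection (P e)) (hsum : ∑ e, P e = 1) :
    P ∈ (positiveResolutionsOfUnity A E).extremePoints ℝ := by
  have hpi : P ∈ (Set.univ.pi fun _ : E => Set.Icc (0 : A) 1).extremePoints ℝ := by
    rw [extremePoints_pi]
    exact fun e _ => isStarProjection_iff_mem_extremePoints_Icc.1 (hproj e)
  exact inter_extremePoints_subset_extremePoints_of_subset
    positiveResolutionsOfUnity_subset_pi_Icc ⟨⟨fun e => (hproj e).nonneg, hsum⟩, hpi⟩

end ResolutionsOfUnity

open scoped MatrixOrder in
theorem isExtremalPOVM_iff_mem_extremePoints {d : ℕ} {E : Type*} [Fintype E]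
    {P : E → Matrix (Fin d) (Fin d) ℂ} :
    IsExtremalPOVM P ↔
      P ∈ (positiveResolutionsOfUnity (Matrix (Fin d) (Fin d) ℂ) E).extremePoints ℝ := by
  simp only [IsExtremalPOVM, IsPOVM, positiveResolutionsOfUnity, nonneg_iff_posSemidef]

theorem stmt8 {d : ℕ} (hd : 1 ≤ d) {E : Type*} [Fintype E]
    (P : E → Matrix (Fin d) (Fin d) ℂ)
    (hherm : ∀ e, (P e).IsHermitian) (hidem : ∀ e, P e * P e = P e)
    (hsum : ∑ e, P e = 1) :
    IsExtremalPOVM P := by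
  open scoped MatrixOrder Matrix.Norms.L2Operator in
  exact isExtremalPOVM_iff_mem_extremePoints.2
    (stmt8_general (fun e => ⟨hidem e, hherm e⟩) hsum)
end

section
/- If P is an extremal POVM with finite outcome set E on ℂ^d, then its nonvanishing elements are linearly independent over ℂ: the family {P_e : e ∈ E, P_e ≠ 0} is linearly independent in M_d(ℂ). -/
/-!
If `∑ r e • P e = 0` with real coefficients, then for small `t > 0` both families
`(1 ± t * r e) • P e` are nonnegative with the same sum as `P`, and `P` is their midpoint, so
extremality forces `r e • P e = 0` for every `e`. This gives independence over `ℝ`. As the `P e` are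
self-adjoint, the real and imaginary parts of the coefficients of a complex relation each satisfy a
real relation, so independence over `ℝ` upgrades to `ℂ`.
-/

open Matrix
open scoped ComplexOrder

section ExtremePoints

variable {𝕜 V ι : Type*} [Field 𝕜] [LinearOrder 𝕜] [IsStrictOrderedRing 𝕜]

lemma eq_zero_of_mem_extremePoints_of_sub_mem_of_add_mem [AddCommGroup V] [Module 𝕜 V]
    {A : Set V} {x v : V} (hx : x ∈ A.extremePoints 𝕜) (hsub : x - v ∈ A) (hadd : x + v ∈ A) :
    v = 0 := by
  have : Invertible (2 : 𝕜) := invertibleOfNonzero two_ne_zero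
  exact sub_eq_self.mp (hx.2 hsub hadd (mem_openSegment_sub_add x v))

lemma exists_pos_forall_abs_mul_le_one [Finite ι] (r : ι → 𝕜) :
    ∃ t : 𝕜, 0 < t ∧ ∀ i, |t * r i| ≤ 1 := by
  obtain ⟨M, hM⟩ := Finite.exists_le fun i => |r i|
  have hpos : 0 < |M| + 1 := by positivity
  refine ⟨(|M| + 1)⁻¹, inv_pos.mpr hpos, fun i => ?_⟩
  rw [abs_mul, abs_of_pos (inv_pos.mpr hpos), inv_mul_le_iff₀ hpos, mul_one]
  linarith [hM i, le_abs_self M]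

variable [Fintype ι] [AddCommGroup V] [Preorder V]

/-- The families of nonnegative vectors with sum `u`. For matrices in the Loewner order and `u = 1`
these are the POVMs with outcome set `ι`. -/
def nonnegResolutions (ι : Type*) [Fintype ι] (u : V) : Set (ι → V) :=
  {Q | (∀ i, 0 ≤ Q i) ∧ ∑ i, Q i = u}

variable [Module 𝕜 V] [PosSMulMono 𝕜 V] {u : V} {P : ι → V}

lemma add_smul_mem_nonnegResolutions (hP : P ∈ nonnegResolutions ι u) {r : ι → 𝕜}
    (hr : ∑ i, r i • P i = 0) (hr_ge : ∀ i, -1 ≤ r i) :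
    (P + fun i => r i • P i) ∈ nonnegResolutions ι u := by
  refine ⟨fun i => ?_, ?_⟩
  · have hcoeff : 0 ≤ 1 + r i := by linarith [hr_ge i]
    simpa only [Pi.add_apply, add_smul, one_smul] using smul_nonneg hcoeff (hP.1 i)
  · simp only [Pi.add_apply, Finset.sum_add_distrib, hP.2, hr, add_zero]

lemma smul_eq_zero_of_mem_extremePoints_nonnegResolutions
    (hP : P ∈ (nonnegResolutions ι u).extremePoints 𝕜) {r : ι → 𝕜}
    (hr : ∑ i, r i • P i = 0) (i : ι) : r i • P i = 0 := by
  obtain ⟨t, ht, htr⟩ := exists_pos_forall_abs_mul_le_one r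
  have hsum : ∑ i, (t * r i) • P i = 0 := by
    simp only [mul_smul, ← Finset.smul_sum, hr, smul_zero]
  have hadd : (P + fun i => (t * r i) • P i) ∈ nonnegResolutions ι u :=
    add_smul_mem_nonnegResolutions hP.1 hsum fun i => (abs_le.mp (htr i)).1
  have hsub : (P - fun i => (t * r i) • P i) ∈ nonnegResolutions ι u := by
    have hneg : ∑ i, (-(t * r i)) • P i = 0 := by
      simp only [neg_smul, Finset.sum_neg_distrib, hsum, neg_zero]
    simpa only [neg_smul, ← Pi.neg_def, ← sub_eq_add_neg] using
      add_smul_mem_nonnegResolutions hP.1 hneg fun i => neg_le_neg (abs_le.mp (htr i)).2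
  have hzero : (t * r i) • P i = 0 :=
    congrFun (eq_zero_of_mem_extremePoints_of_sub_mem_of_add_mem hP hsub hadd) i
  rw [mul_smul] at hzero
  exact (smul_eq_zero.mp hzero).resolve_left ht.ne'

lemma linearIndepOn_support_of_mem_extremePoints_nonnegResolutions
    (hP : P ∈ (nonnegResolutions ι u).extremePoints 𝕜) :
    LinearIndepOn 𝕜 P (Function.support P) := by
  refine linearIndepOn_iff''.mpr fun s r hs hrs hr i hi => ?_
  have hr_univ : ∑ i, r i • P i = 0 := by
    rw [← hr]
    exact (Finset.sum_subset s.subset_univ fun j _ hj => by rw [hrs j hj, zero_smul]).symm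
  exact (smul_eq_zero.mp
    (smul_eq_zero_of_mem_extremePoints_nonnegResolutions hP hr_univ i)).resolve_right (hs hi)

end ExtremePoints

section SelfAdjoint

open scoped ComplexStarModule

variable {A ι : Type*} [AddCommGroup A] [Module ℂ A] [StarAddMonoid A] [StarModule ℂ A]

lemma realPart_smul_of_isSelfAdjoint {a : A} (ha : IsSelfAdjoint a) (z : ℂ) :
    (ℜ (z • a) : A) = z.re • a := by
  rw [realPart_smul, ha.imaginaryPart, smul_zero, sub_zero, selfAdjoint.val_smul, ha.coe_realPart]

lemma imaginaryPart_smul_of_isSelfAdjoint {a : A} (ha : IsSelfAdjoint a) (z : ℂ) :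
    (ℑ (z • a) : A) = z.im • a := by
  rw [imaginaryPart_smul, ha.imaginaryPart, smul_zero, zero_add, selfAdjoint.val_smul,
    ha.coe_realPart]

lemma linearIndependent_complex_of_isSelfAdjoint {v : ι → A} (hv : ∀ i, IsSelfAdjoint (v i))
    (hind : LinearIndependent ℝ v) : LinearIndependent ℂ v := by
  rw [linearIndependent_iff'] at hind ⊢
  intro s c hc i hi
  have hre : ∑ i ∈ s, (c i).re • v i = 0 := by
    simpa only [map_sum, AddSubgroup.val_finsetSum, realPart_smul_of_isSelfAdjoint (hv _),
      map_zero, ZeroMemClass.coe_zero] using congrArg (fun a => (ℜ a : A)) hc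
  have him : ∑ i ∈ s, (c i).im • v i = 0 := by
    simpa only [map_sum, AddSubgroup.val_finsetSum, imaginaryPart_smul_of_isSelfAdjoint (hv _),
      map_zero, ZeroMemClass.coe_zero] using congrArg (fun a => (ℑ a : A)) hc
  exact Complex.ext (hind s _ hre i hi) (hind s _ him i hi)

theorem stmt11_general [Fintype ι] [Preorder A] [PosSMulMono ℝ A] {u : A} {P : ι → A}
    (hP : P ∈ (nonnegResolutions ι u).extremePoints ℝ) (hsa : ∀ i, IsSelfAdjoint (P i)) :
    LinearIndepOn ℂ P (Function.support P) :=
  linearIndependent_complex_of_isSelfAdjoint (fun i => hsa i)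
    (linearIndepOn_support_of_mem_extremePoints_nonnegResolutions hP)

end SelfAdjoint

open scoped MatrixOrder in
lemma setOf_isPOVM_eq_nonnegResolutions {d : ℕ} {E : Type*} [Fintype E] :
    {Q : E → Matrix (Fin d) (Fin d) ℂ | IsPOVM Q} = nonnegResolutions E 1 := by
  simp only [IsPOVM, nonnegResolutions, nonneg_iff_posSemidef]

theorem stmt11 {d : ℕ} (hd : 1 ≤ d) {E : Type*} [Fintype E]
    (P : E → Matrix (Fin d) (Fin d) ℂ) (hP : IsPOVM P)
    (hext : IsExtremalPOVM P) :
    LinearIndependent ℂ (fun e : {e : E // P e ≠ 0} => P e.1) := by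
  rw [IsExtremalPOVM, setOf_isPOVM_eq_nonnegResolutions] at hext
  open scoped MatrixOrder in
  exact stmt11_general hext fun e => (hP.1 e).isHermitian
end

section
/- Let P : Fin 3 → M_2(ℂ) be a POVM on ℂ² such that every element P_e has rank one and no two elements are proportional (for e ≠ f there is no scalar c ∈ ℂ with P_e = c · P_f). Then P is extremal. -/
/-!
If `P = a Q + b R` with POVMs `Q`, `R` and `a, b > 0`, then `ker P_e ⊆ ker Q_e`, and since `P_e` has
rank one, `Q_e = q_e P_e`. Both families sum to the identity, so `∑ (q_e - 1) P_e = 0`, and `Q = P`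
as soon as the `P_e` are linearly independent.

For independence, fix `e` and let `f`, `g` be the other two outcomes. As `P_e` is proportional to
neither `P_f` nor `P_g`, there are `x ∈ ker P_f` and `y ∈ ker P_g`, both outside `ker P_e`. The
functional `X ↦ x⋆ X y` vanishes at `P_f` and `P_g`, but not at `P_e`, because `P_e` has rank one.
-/

open Matrix
open scoped ComplexOrder

lemma exists_mulVec_ne_zero {m n R : Type*} [Fintype n] [NonAssocSemiring R]
    {A : Matrix m n R} (hA : A ≠ 0) : ∃ x, A *ᵥ x ≠ 0 := by
  contrapose! hA
  exact ext_iff_mulVec.2 fun x ↦ by rw [hA x, zero_mulVec]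

lemma star_vecMul_of_isHermitian {n R : Type*} [Fintype n] [NonUnitalSemiring R] [StarRing R]
    {A : Matrix n n R} (hA : A.IsHermitian) (x : n → R) :
    star x ᵥ* A = star (A *ᵥ x) := by
  rw [star_mulVec, hA.eq]

section Field

variable {m n K : Type*} [Fintype n] [Field K]

lemma exists_eq_vecMulVec_of_rank_le_one [Finite m] {A : Matrix m n K} (hA : A.rank ≤ 1) :
    ∃ (u : m → K) (w : n → K), A = vecMulVec u w := by
  rw [rank_eq_finrank_span_cols, finrank_le_one_iff] at hA
  obtain ⟨u, hu⟩ := hA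
  choose w hw using fun j ↦ hu ⟨A.col j, Submodule.subset_span ⟨j, rfl⟩⟩
  refine ⟨u, w, ?_⟩
  ext i j
  have hij : w j * (u : m → K) i = A i j := congrFun (congrArg Subtype.val (hw j)) i
  rw [vecMulVec_apply, mul_comm, hij]

variable [Fintype m]

lemma mul_mul_self_of_rank_le_one {A : Matrix m n K} (hA : A.rank ≤ 1) (X : Matrix n m K) :
    A * X * A = (A * X).trace • A := by
  obtain ⟨u, w, rfl⟩ := exists_eq_vecMulVec_of_rank_le_one hA
  rw [vecMulVec_mul, vecMulVec_mul_vecMulVec, trace_vecMulVec, vecMulVec_smul, dotProduct_comm]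

lemma mul_self_of_rank_le_one {A : Matrix n n K} (hA : A.rank ≤ 1) : A * A = A.trace • A := by
  classical simpa only [mul_one] using mul_mul_self_of_rank_le_one hA 1

lemma vecMul_eq_zero_or_mulVec_eq_zero_of_rank_le_one {A : Matrix m n K} (hA : A.rank ≤ 1)
    {x : m → K} {y : n → K} (h : x ⬝ᵥ A *ᵥ y = 0) : x ᵥ* A = 0 ∨ A *ᵥ y = 0 := by
  obtain ⟨u, w, rfl⟩ := exists_eq_vecMulVec_of_rank_le_one hA
  have hmul : (x ⬝ᵥ u) * (w ⬝ᵥ y) = 0 := by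
    rwa [dotProduct_mulVec, vecMul_vecMulVec, smul_dotProduct, smul_eq_mul] at h
  refine (mul_eq_zero.1 hmul).imp (fun hx ↦ ?_) (fun hy ↦ ?_)
  · rw [vecMul_vecMulVec, hx, zero_smul]
  · rw [vecMulVec_mulVec, hy, MulOpposite.op_zero, zero_smul]

lemma linearIndependent_of_exists_dotProduct_mulVec {ι : Type*} [Finite ι]
    {P : ι → Matrix m n K}
    (hP : ∀ i, ∃ x y, x ⬝ᵥ P i *ᵥ y ≠ 0 ∧ ∀ j ≠ i, x ⬝ᵥ P j *ᵥ y = 0) :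
    LinearIndependent K P := by
  cases nonempty_fintype ι
  rw [Fintype.linearIndependent_iff]
  intro c hc i
  obtain ⟨x, y, hi, hne⟩ := hP i
  have hsum : ∑ j, c j * (x ⬝ᵥ P j *ᵥ y) = 0 := by
    simpa only [sum_mulVec, dotProduct_sum, smul_mulVec, dotProduct_smul, smul_eq_mul,
      zero_mulVec, dotProduct_zero] using congrArg (fun M ↦ x ⬝ᵥ M *ᵥ y) hc
  rw [Fintype.sum_eq_single i fun j hj ↦ by rw [hne j hj, mul_zero]] at hsum
  exact (mul_eq_zero.1 hsum).resolve_right hi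

end Field

lemma exists_forall_ne_eq_or_eq {E : Type*} [Fintype E] (hE : Fintype.card E ≤ 3) (e : E) :
    ∃ f g : E, ∀ h ≠ e, h = f ∨ h = g := by
  classical
  by_cases hf : ∃ f, f ≠ e
  · obtain ⟨f, hfe⟩ := hf
    have : Nonempty E := ⟨e⟩
    have hcard : ((Finset.univ.erase e).erase f).card ≤ 1 := by
      rw [Finset.card_erase_of_mem (by simpa using hfe), Finset.card_erase_of_mem (by simp),
        Finset.card_univ]
      omega
    obtain ⟨g, hg⟩ := Finset.card_le_one_iff_subset_singleton.1 hcard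
    refine ⟨f, g, fun h he ↦ or_iff_not_imp_left.2 fun hhf ↦ ?_⟩
    exact Finset.mem_singleton.1 (hg (by simp [hhf, he]))
  · exact ⟨e, e, fun h he ↦ (hf ⟨h, he⟩).elim⟩

section RCLike

variable {n 𝕜 : Type*} [Fintype n] [RCLike 𝕜]

lemma mulVec_eq_zero_of_add_mulVec_eq_zero {A B : Matrix n n 𝕜} (hA : A.PosSemidef)
    (hB : B.PosSemidef) {x : n → 𝕜} (h : (A + B) *ᵥ x = 0) : A *ᵥ x = 0 := by
  have hsum : star x ⬝ᵥ A *ᵥ x + star x ⬝ᵥ B *ᵥ x = 0 := by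
    rw [← dotProduct_add, ← add_mulVec, h, dotProduct_zero]
  rw [← hA.dotProduct_mulVec_zero_iff]
  exact ((add_eq_zero_iff_of_nonneg (hA.dotProduct_mulVec_nonneg x)
    (hB.dotProduct_mulVec_nonneg x)).1 hsum).1

lemma trace_ne_zero_of_isHermitian_of_rank_le_one {A : Matrix n n 𝕜} (hA : A.IsHermitian)
    (hrank : A.rank ≤ 1) (hne : A ≠ 0) : A.trace ≠ 0 := by
  intro htr
  apply hne
  rw [← conjTranspose_mul_self_eq_zero, hA.eq, mul_self_of_rank_le_one hrank, htr, zero_smul]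

-- With `t = tr A`, the matrix `t⁻¹ A` is the orthogonal projection onto the range of `A`, and `B`
-- vanishes on the orthogonal complement; so `t̄ t B = A B A`, which is a multiple of `A`.
lemma exists_eq_smul_of_forall_mulVec_eq_zero {A B : Matrix n n 𝕜} (hA : A.IsHermitian)
    (hrank : A.rank ≤ 1) (hB : B.IsHermitian) (hker : ∀ x, A *ᵥ x = 0 → B *ᵥ x = 0) :
    ∃ c : 𝕜, B = c • A := by
  rcases eq_or_ne A 0 with rfl | hne
  · refine ⟨0, ?_⟩
    rw [zero_smul, ext_iff_mulVec]
    intro x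
    rw [hker x (zero_mulVec x), zero_mulVec]
  set t := A.trace
  have ht : t ≠ 0 := trace_ne_zero_of_isHermitian_of_rank_le_one hA hrank hne
  have hBA : B * A = t • B := by
    refine ext_iff_mulVec.2 fun x ↦ ?_
    have hx : A *ᵥ (A *ᵥ x - t • x) = 0 := by
      rw [mulVec_sub, mulVec_mulVec, mul_self_of_rank_le_one hrank, smul_mulVec, mulVec_smul,
        sub_self]
    rw [← mulVec_mulVec, smul_mulVec, ← mulVec_smul, ← sub_eq_zero, ← mulVec_sub]
    exact hker _ hx
  have hAB : A * B = star t • B := by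
    simpa only [conjTranspose_mul, conjTranspose_smul, hA.eq, hB.eq]
      using congrArg conjTranspose hBA
  have hABA : (star t * t) • B = (A * B).trace • A := by
    rw [← mul_mul_self_of_rank_le_one hrank, hAB, smul_mul_assoc, hBA, smul_smul]
  refine ⟨(star t * t)⁻¹ * (A * B).trace, ?_⟩
  rw [mul_smul, ← hABA, inv_smul_smul₀ (mul_ne_zero (star_ne_zero.2 ht) ht)]

lemma exists_mulVec_eq_zero_and_mulVec_ne_zero {A B : Matrix n n 𝕜} (hA : A.IsHermitian)
    (hrank : A.rank ≤ 1) (hB : B.IsHermitian) (hprop : ¬ ∃ c : 𝕜, B = c • A) :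
    ∃ x, A *ᵥ x = 0 ∧ B *ᵥ x ≠ 0 := by
  contrapose! hprop
  exact exists_eq_smul_of_forall_mulVec_eq_zero hA hrank hB hprop

lemma linearIndependent_of_rank_eq_one_of_card_le_three {E : Type*} [Fintype E]
    (hE : Fintype.card E ≤ 3) {P : E → Matrix n n 𝕜} (hP : ∀ e, (P e).IsHermitian)
    (hrank : ∀ e, (P e).rank = 1) (hprop : ∀ e f, e ≠ f → ¬ ∃ c : 𝕜, P e = c • P f) :
    LinearIndependent 𝕜 P := by
  have hsep : ∀ e f, ∃ x, P e *ᵥ x ≠ 0 ∧ (f ≠ e → P f *ᵥ x = 0) := by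
    intro e f
    rcases eq_or_ne f e with rfl | hfe
    · have hne : P f ≠ 0 := fun h ↦ by simpa [h] using hrank f
      obtain ⟨x, hx⟩ := exists_mulVec_ne_zero hne
      exact ⟨x, hx, fun h ↦ (h rfl).elim⟩
    · obtain ⟨x, hfx, hex⟩ := exists_mulVec_eq_zero_and_mulVec_ne_zero (hP f) (hrank f).le (hP e)
        (hprop e f hfe.symm)
      exact ⟨x, hex, fun _ ↦ hfx⟩
  refine linearIndependent_of_exists_dotProduct_mulVec fun e ↦ ?_
  obtain ⟨f, g, hfg⟩ := exists_forall_ne_eq_or_eq hE e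
  obtain ⟨x, hex, hfx⟩ := hsep e f
  obtain ⟨y, hey, hgy⟩ := hsep e g
  refine ⟨star x, y, fun h ↦ ?_, fun h he ↦ ?_⟩
  · rcases vecMul_eq_zero_or_mulVec_eq_zero_of_rank_le_one (hrank e).le h with hx | hy
    · rw [star_vecMul_of_isHermitian (hP e), star_eq_zero] at hx
      exact hex hx
    · exact hey hy
  · rcases hfg h he with rfl | rfl
    · rw [dotProduct_mulVec, star_vecMul_of_isHermitian (hP h), hfx he, star_zero,
        zero_dotProduct]
    · rw [hgy he, dotProduct_zero]

end RCLike

lemma IsPOVM.isExtremalPOVM_of_linearIndependent {d : ℕ} {E : Type*} [Fintype E]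
    {P : E → Matrix (Fin d) (Fin d) ℂ} (hP : IsPOVM P) (hrank : ∀ e, (P e).rank ≤ 1)
    (hind : LinearIndependent ℂ P) : IsExtremalPOVM P := by
  refine ⟨hP, ?_⟩
  rintro Q hQ R hR ⟨a, b, ha, hb, -, hab⟩
  have hmul : ∀ e, ∃ q : ℂ, Q e = q • P e := by
    intro e
    refine exists_eq_smul_of_forall_mulVec_eq_zero (hP.1 e).isHermitian (hrank e)
      (hQ.1 e).isHermitian fun x hx ↦ ?_
    rw [← hab] at hx
    have haQ : (a • Q e) *ᵥ x = 0 := mulVec_eq_zero_of_add_mulVec_eq_zero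
      ((hQ.1 e).smul ha.le) ((hR.1 e).smul hb.le) hx
    rw [smul_mulVec] at haQ
    exact (smul_eq_zero.1 haQ).resolve_left ha.ne'
  choose q hq using hmul
  have hrel : ∑ e, (q e - 1) • P e = 0 := by
    simp only [sub_smul, one_smul, ← hq, Finset.sum_sub_distrib]
    rw [hQ.2, hP.2, sub_self]
  ext1 e
  rw [hq e, sub_eq_zero.1 (Fintype.linearIndependent_iff.1 hind _ hrel e), one_smul]

theorem stmt13_general {d : ℕ} {E : Type*} [Fintype E] (hE : Fintype.card E ≤ 3)
    (P : E → Matrix (Fin d) (Fin d) ℂ) (hP : IsPOVM P) (hrank : ∀ e, (P e).rank = 1)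
    (hprop : ∀ e f : E, e ≠ f → ¬ ∃ c : ℂ, P e = c • P f) :
    IsExtremalPOVM P :=
  hP.isExtremalPOVM_of_linearIndependent (fun e ↦ (hrank e).le)
    (linearIndependent_of_rank_eq_one_of_card_le_three hE (fun e ↦ (hP.1 e).isHermitian)
      hrank hprop)

theorem stmt13 (P : Fin 3 → Matrix (Fin 2) (Fin 2) ℂ) (hP : IsPOVM P)
    (hrank : ∀ e, (P e).rank = 1)
    (hprop : ∀ e f : Fin 3, e ≠ f → ¬ ∃ c : ℂ, P e = c • P f) :
    IsExtremalPOVM P :=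
  stmt13_general (Fintype.card_fin 3).le P hP hrank hprop
end

section
/- Let α : Fin 4 → ℝ satisfy α_e > 0 for all e and ∑_e α_e = 1, and let n : Fin 4 → ℝ³ be unit vectors with ∑_e α_e • n_e = 0. Define P_e = α_e • (I + n_e(1)σ₁ + n_e(2)σ₂ + n_e(3)σ₃) ∈ M_2(ℂ). Then P is a POVM on ℂ², and P is extremal if and only if the vectors n_0, n_1, n_2, n_3 span ℝ³ (i.e., they do not all lie in a common plane through the origin). -/
/-!
A POVM with rank-one effects is extremal iff its effects are linearly independent over `ℝ`. Indeed,
a rank-one positive matrix spans an extreme ray of the positive cone, so the components of any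
convex decomposition of the POVM have effects proportional to the given ones, and two weightings of
the same independent effects with the same sum agree; conversely, a relation `∑ c e • P e = 0`
makes `(1 ± ε c e) • P e` two POVMs with midpoint `P`.

In Bloch coordinates a qubit effect `t + q·σ` is positive of rank one iff `(t, q)` is nonzero on the
boundary of the forward light cone, as the vectors `α e • (1, n e)` are. They are independent iff
the `n e` are affinely independent, that is, iff these four points of `ℝ³` have a three-dimensional
affine span, and the latter is their linear span since it contains `0 = ∑ α e • n e`.
-/

open Matrix
open scoped ComplexOrder

/-- The Pauli matrix σ₁. -/
noncomputable def pauli1 : Matrix (Fin 2) (Fin 2) ℂ := !![0, 1; 1, 0]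

/-- The Pauli matrix σ₂. -/
noncomputable def pauli2 : Matrix (Fin 2) (Fin 2) ℂ := !![0, -Complex.I; Complex.I, 0]

/-- The Pauli matrix σ₃. -/
noncomputable def pauli3 : Matrix (Fin 2) (Fin 2) ℂ := !![1, 0; 0, -1]

section OrderedModule

variable {𝕜 E V : Type*} [Field 𝕜] [LinearOrder 𝕜] [AddCommGroup V] [Module 𝕜 V]

lemma eq_zero_of_add_mem_of_sub_mem_of_mem_extremePoints [IsStrictOrderedRing 𝕜] {A : Set V}
    {x y : V} (hx : x ∈ A.extremePoints 𝕜) (hadd : x + y ∈ A) (hsub : x - y ∈ A) : y = 0 := by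
  have hseg : x ∈ openSegment 𝕜 (x + y) (x - y) :=
    ⟨1 / 2, 1 / 2, by norm_num, by norm_num, by norm_num, by module⟩
  simpa using ((mem_extremePoints.1 hx).2 _ hadd _ hsub hseg).1

variable [PartialOrder V]

variable (𝕜) in
/-- The vector `x` spans an extreme ray of the positive cone: everything below it in the cone is
proportional to it. Used for nonnegative `x`; the zero vector is allowed. -/
def SpansExtremeRay (x : V) : Prop :=
  Set.Icc 0 x ⊆ (Submodule.span 𝕜 {x} : Set V)

lemma SpansExtremeRay.mem_span_of_add_eq [IsOrderedAddMonoid V] [PosSMulMono 𝕜 V] {x y z : V}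
    {a b : 𝕜} (hx : SpansExtremeRay 𝕜 x) (ha : 0 < a) (hb : 0 ≤ b) (hy : 0 ≤ y) (hz : 0 ≤ z)
    (h : a • y + b • z = x) : y ∈ Submodule.span 𝕜 {x} := by
  have hle : a • y ≤ x := h ▸ le_add_of_nonneg_right (smul_nonneg hb hz)
  exact (Submodule.smul_mem_iff _ ha.ne').1 (hx ⟨smul_nonneg ha.le hy, hle⟩)

variable [Fintype E]

/-- The families of nonnegative vectors with sum `u`: the analogue of POVMs in an ordered vector
space with unit `u`. -/
def resolutions (u : V) : Set (E → V) :=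
  {x | (∀ e, 0 ≤ x e) ∧ ∑ e, x e = u}

variable [PosSMulMono 𝕜 V] {u : V} {x : E → V}

lemma mem_extremePoints_resolutions_of_linearIndependent [IsOrderedAddMonoid V]
    (hx : x ∈ resolutions u) (hray : ∀ e, SpansExtremeRay 𝕜 (x e)) (hli : LinearIndependent 𝕜 x) :
    x ∈ (resolutions u).extremePoints 𝕜 := by
  refine mem_extremePoints_iff_left.2 ⟨hx, ?_⟩
  rintro y hy z hz ⟨a, b, ha, hb, -, hab⟩
  have hspan : ∀ e, ∃ c : 𝕜, c • x e = y e := fun e => Submodule.mem_span_singleton.1 <|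
    (hray e).mem_span_of_add_eq ha hb.le (hy.1 e) (hz.1 e) (congrFun hab e)
  choose c hc using hspan
  have hsum : ∑ e, c e • x e = ∑ e, (1 : 𝕜) • x e := by
    simp only [hc, one_smul, hy.2, hx.2]
  funext e
  rw [← hc e, Fintype.linearIndependent_iffₛ.1 hli c (fun _ => 1) hsum e, one_smul]

variable [IsStrictOrderedRing 𝕜]

lemma add_smul_mem_resolutions {c : E → 𝕜} (hx : x ∈ resolutions u) (hc : ∀ e, |c e| ≤ 1)
    (hsum : ∑ e, c e • x e = 0) : x + (fun e => c e • x e) ∈ resolutions u := by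
  refine ⟨fun e => ?_, ?_⟩
  · have hnonneg : 0 ≤ 1 + c e := by linarith [neg_le_of_abs_le (hc e)]
    simpa only [Pi.add_apply, add_smul, one_smul] using smul_nonneg hnonneg (hx.1 e)
  · simp only [Pi.add_apply, Finset.sum_add_distrib, hx.2, hsum, add_zero]

lemma smul_eq_zero_of_mem_extremePoints_resolutions {c : E → 𝕜}
    (hx : x ∈ (resolutions u).extremePoints 𝕜) (hc : ∀ e, |c e| ≤ 1)
    (hsum : ∑ e, c e • x e = 0) (e : E) : c e • x e = 0 := by
  refine congrFun (eq_zero_of_add_mem_of_sub_mem_of_mem_extremePoints hx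
    (add_smul_mem_resolutions hx.1 hc hsum) ?_) e
  have hneg : x + (fun e => -c e • x e) ∈ resolutions u :=
    add_smul_mem_resolutions hx.1 (by simpa only [abs_neg] using hc)
      (by simp only [neg_smul, Finset.sum_neg_distrib, hsum, neg_zero])
  convert hneg using 1
  funext e
  simp only [Pi.sub_apply, Pi.add_apply, neg_smul, sub_eq_add_neg]

lemma linearIndependent_of_mem_extremePoints_resolutions
    (hx : x ∈ (resolutions u).extremePoints 𝕜) (hne : ∀ e, x e ≠ 0) : LinearIndependent 𝕜 x := by
  refine Fintype.linearIndependent_iff.2 fun c hc e => ?_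
  set ε : 𝕜 := (1 + ∑ i, |c i|)⁻¹
  have hε : 0 < ε := by positivity
  have hbound : ∀ i, |ε * c i| ≤ 1 := fun i => by
    have hle : |c i| ≤ ∑ j, |c j| :=
      Finset.single_le_sum (fun j _ => abs_nonneg (c j)) (Finset.mem_univ i)
    rw [abs_mul, abs_of_pos hε, inv_mul_le_one₀ (by positivity)]
    linarith
  have hsum : ∑ i, (ε * c i) • x i = 0 := by
    simp only [mul_smul, ← Finset.smul_sum, hc, smul_zero]
  simpa [hε.ne', hne e] using smul_eq_zero_of_mem_extremePoints_resolutions hx hbound hsum e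

theorem mem_extremePoints_resolutions_iff_linearIndependent [IsOrderedAddMonoid V]
    (hx : x ∈ resolutions u) (hne : ∀ e, x e ≠ 0) (hray : ∀ e, SpansExtremeRay 𝕜 (x e)) :
    x ∈ (resolutions u).extremePoints 𝕜 ↔ LinearIndependent 𝕜 x :=
  ⟨fun h => linearIndependent_of_mem_extremePoints_resolutions h hne,
    mem_extremePoints_resolutions_of_linearIndependent hx hray⟩

end OrderedModule

section RankOne

lemma rank_lt_card_of_det_eq_zero {K m : Type*} [Field K] [Fintype m] [DecidableEq m]
    {A : Matrix m m K} (hA : A.det = 0) : A.rank < Fintype.card m := by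
  refine A.rank_le_card_width.lt_of_ne fun h => ?_
  have hsurj : Function.Surjective A.mulVec := LinearMap.range_eq_top.1 <|
    Submodule.eq_top_of_finrank_eq (h.trans (Module.finrank_fintype_fun_eq_card K).symm)
  exact ((isUnit_iff_isUnit_det A).1 (mulVec_surjective_iff_isUnit.1 hsurj)).ne_zero hA

lemma matrix_rank_eq_zero_iff {K l m : Type*} [Field K] [Fintype m] {A : Matrix l m K} :
    A.rank = 0 ↔ A = 0 := by
  classical
  rw [rank, Submodule.finrank_eq_zero, LinearMap.range_eq_bot, ← toLin'_apply',
    LinearEquiv.map_eq_zero_iff]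

lemma exists_forall_mulVec_eq_smul_of_rank_le_one {K l m : Type*} [Field K] [Fintype m]
    {A : Matrix l m K} (hA : A.rank ≤ 1) : ∃ x, ∀ y, ∃ c : K, A *ᵥ y = c • A *ᵥ x := by
  obtain ⟨⟨_, x, rfl⟩, hx⟩ := finrank_le_one_iff.1 hA
  refine ⟨x, fun y => ?_⟩
  obtain ⟨c, hc⟩ := hx ⟨A *ᵥ y, y, rfl⟩
  exact ⟨c, (congrArg Subtype.val hc).symm⟩

lemma exists_real_smul_eq_of_nonneg {𝕜 : Type*} [RCLike 𝕜] {a b : 𝕜} (ha : 0 ≤ a) (hb : 0 ≤ b)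
    (hab : a = 0 → b = 0) : ∃ r : ℝ, r • a = b := by
  obtain ⟨s, -, rfl⟩ := RCLike.nonneg_iff_exists_ofReal.1 ha
  obtain ⟨t, -, rfl⟩ := RCLike.nonneg_iff_exists_ofReal.1 hb
  norm_cast at hab
  refine ⟨t / s, ?_⟩
  rw [RCLike.real_smul_ofReal, ← RCLike.ofReal_mul, div_mul_cancel_of_imp hab]

lemma isHermitian_eq_smul_vecMulVec {R m : Type*} [CommSemiring R] [StarRing R] [Fintype m]
    {A : Matrix m m R} (hA : A.IsHermitian) {x c : m → R} (h : ∀ j, A.col j = c j • A *ᵥ x) :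
    A = (star x ⬝ᵥ A *ᵥ x) • vecMulVec (star c) c := by
  set s := star x ⬝ᵥ A *ᵥ x with hs
  have hself : star s = s := by
    rw [hs, ← star_dotProduct, star_mulVec, hA.eq, ← dotProduct_mulVec]
  have hmulVec : ∀ i, (A *ᵥ x) i = s * star (c i) := fun i =>
    calc (A *ᵥ x) i = star (star x ⬝ᵥ A.col i) := by
          simp [mulVec, dotProduct, hA.apply, mul_comm]
      _ = s * star (c i) := by rw [h, dotProduct_smul, smul_eq_mul, star_mul, ← hs, hself]
  ext i j
  calc A i j = c j * (A *ᵥ x) i := congrFun (h j) i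
    _ = (s • vecMulVec (star c) c) i j := by
      rw [hmulVec, Matrix.smul_apply, vecMulVec_apply, Pi.star_apply, smul_eq_mul]
      ring

variable {𝕜 m : Type*} [RCLike 𝕜] [Fintype m] {A B : Matrix m m 𝕜}

open scoped MatrixOrder

lemma mulVec_eq_zero_of_le (hB : 0 ≤ B) (hBA : B ≤ A) {x : m → 𝕜} (hx : A *ᵥ x = 0) :
    B *ᵥ x = 0 := by
  have hle := (Matrix.le_iff.1 hBA).dotProduct_mulVec_nonneg x
  rw [sub_mulVec, hx, zero_sub, dotProduct_neg, neg_nonneg] at hle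
  exact (hB.posSemidef.dotProduct_mulVec_zero_iff x).1
    (hle.antisymm (hB.posSemidef.dotProduct_mulVec_nonneg x))

lemma mulVec_eq_smul_mulVec_of_le (hB : 0 ≤ B) (hBA : B ≤ A) {x y : m → 𝕜} {c : 𝕜}
    (h : A *ᵥ y = c • A *ᵥ x) : B *ᵥ y = c • B *ᵥ x := by
  rw [← mulVec_smul, ← sub_eq_zero, ← mulVec_sub] at h ⊢
  exact mulVec_eq_zero_of_le hB hBA h

theorem spansExtremeRay_of_rank_le_one (hA : A.rank ≤ 1) : SpansExtremeRay ℝ A := by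
  classical
  rintro B ⟨hB, hBA⟩
  have hApos : A.PosSemidef := (hB.trans hBA).posSemidef
  obtain ⟨x, hx⟩ := exists_forall_mulVec_eq_smul_of_rank_le_one hA
  choose c hc using fun j => hx (Pi.single j 1)
  have hAeq : A = (star x ⬝ᵥ A *ᵥ x) • vecMulVec (star c) c :=
    isHermitian_eq_smul_vecMulVec hApos.isHermitian fun j => by rw [← hc, mulVec_single_one]
  have hBeq : B = (star x ⬝ᵥ B *ᵥ x) • vecMulVec (star c) c :=
    isHermitian_eq_smul_vecMulVec hB.posSemidef.isHermitian fun j => by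
      rw [← mulVec_eq_smul_mulVec_of_le hB hBA (hc j), mulVec_single_one]
  obtain ⟨r, hr⟩ : ∃ r : ℝ, r • (star x ⬝ᵥ A *ᵥ x) = star x ⬝ᵥ B *ᵥ x := by
    refine exists_real_smul_eq_of_nonneg (hApos.dotProduct_mulVec_nonneg x)
      (hB.posSemidef.dotProduct_mulVec_nonneg x) fun h => ?_
    rw [mulVec_eq_zero_of_le hB hBA ((hApos.dotProduct_mulVec_zero_iff x).1 h), dotProduct_zero]
  exact Submodule.mem_span_singleton.2 ⟨r, by rw [hAeq, hBeq, ← smul_assoc, hr]⟩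

end RankOne

theorem isExtremalPOVM_iff_linearIndependent {d : ℕ} {E : Type*} [Fintype E]
    {P : E → Matrix (Fin d) (Fin d) ℂ} (hP : IsPOVM P) (hrank : ∀ e, (P e).rank = 1) :
    IsExtremalPOVM P ↔ LinearIndependent ℝ P := by
  open scoped MatrixOrder in
  have hset : {Q : E → Matrix (Fin d) (Fin d) ℂ | IsPOVM Q} = resolutions 1 := by
    ext Q
    simp only [resolutions, IsPOVM, Set.mem_ofPred_eq, Matrix.nonneg_iff_posSemidef]
  rw [IsExtremalPOVM, hset]
  refine mem_extremePoints_resolutions_iff_linearIndependent (hset.subset hP) (fun e he => ?_)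
    fun e => spansExtremeRay_of_rank_le_one (hrank e).le
  simpa [he] using hrank e

section Affine

variable {k ι V : Type*} [AddCommGroup V]

lemma linearIndependent_one_prodMk_iff [Ring k] [Module k V] {p : ι → V} :
    LinearIndependent k (fun i => ((1 : k), p i)) ↔ AffineIndependent k p := by
  simp only [linearIndependent_iff', affineIndependent_iff, Prod.ext_iff, Prod.fst_sum,
    Prod.snd_sum, Prod.smul_fst, Prod.smul_snd, smul_eq_mul, mul_one, Prod.fst_zero, Prod.snd_zero,
    and_imp]

variable [DivisionRing k] [Module k V]

lemma vectorSpan_eq_span_of_zero_mem_affineSpan {s : Set V} (h : (0 : V) ∈ affineSpan k s) :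
    vectorSpan k s = Submodule.span k s := by
  rw [← vectorSpan_insert_eq_vectorSpan h,
    vectorSpan_eq_span_vsub_set_right k (Set.mem_insert 0 s)]
  simp

lemma affineIndependent_iff_span_eq_top [Fintype ι] [FiniteDimensional k V] {p : ι → V}
    (hcard : Fintype.card ι = Module.finrank k V + 1)
    (hzero : (0 : V) ∈ affineSpan k (Set.range p)) :
    AffineIndependent k p ↔ Submodule.span k (Set.range p) = ⊤ := by
  rw [affineIndependent_iff_finrank_vectorSpan_eq k p hcard,
    vectorSpan_eq_span_of_zero_mem_affineSpan hzero]
  exact ⟨Submodule.eq_top_of_finrank_eq, fun h => h ▸ finrank_top k V⟩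

lemma zero_mem_affineSpan_of_sum_smul_eq_zero [Fintype ι] {p : ι → V} {w : ι → k}
    (hw : ∑ i, w i = 1) (hp : ∑ i, w i • p i = 0) : (0 : V) ∈ affineSpan k (Set.range p) := by
  have h := affineCombination_mem_affineSpan hw p
  rwa [Finset.affineCombination_eq_linear_combination _ _ _ hw, hp] at h

end Affine

section Bloch

/-- The Bloch parametrization `(t, q) ↦ t I + q₁ σ₁ + q₂ σ₂ + q₃ σ₃` of the Hermitian `2 × 2`
matrices as a real-linear map. The vector `q` is indexed from `0`. -/
noncomputable def blochMatrix : ℝ × (Fin 3 → ℝ) →ₗ[ℝ] Matrix (Fin 2) (Fin 2) ℂ where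
  toFun p := (p.1 : ℂ) • 1 + (p.2 0 : ℂ) • pauli1 + (p.2 1 : ℂ) • pauli2 + (p.2 2 : ℂ) • pauli3
  map_add' p q := by
    simp only [Prod.fst_add, Prod.snd_add, Pi.add_apply, Complex.ofReal_add]
    module
  map_smul' r p := by
    simp only [Prod.smul_fst, Prod.smul_snd, Pi.smul_apply, smul_eq_mul, Complex.ofReal_mul,
      RingHom.id_apply, ← Complex.coe_smul]
    module

lemma blochMatrix_eq (p : ℝ × (Fin 3 → ℝ)) :
    blochMatrix p = !![(p.1 + p.2 2 : ℂ), p.2 0 - p.2 1 * Complex.I;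
      p.2 0 + p.2 1 * Complex.I, p.1 - p.2 2] := by
  ext i j
  fin_cases i <;> fin_cases j <;>
    simp [blochMatrix, pauli1, pauli2, pauli3, sub_eq_add_neg]

lemma blochMatrix_one_zero : blochMatrix (1, 0) = 1 := by
  simp [blochMatrix]

lemma blochMatrix_one_mk (q : Fin 3 → ℝ) : blochMatrix (1, q) =
    1 + (q 0 : ℂ) • pauli1 + (q 1 : ℂ) • pauli2 + (q 2 : ℂ) • pauli3 := by
  simp [blochMatrix]

lemma trace_blochMatrix (p : ℝ × (Fin 3 → ℝ)) : (blochMatrix p).trace = 2 * p.1 := by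
  rw [blochMatrix_eq, trace_fin_two_of]
  ring

lemma det_blochMatrix (p : ℝ × (Fin 3 → ℝ)) :
    (blochMatrix p).det = ((p.1 ^ 2 - ∑ i, p.2 i ^ 2 : ℝ) : ℂ) := by
  rw [blochMatrix_eq, det_fin_two_of, Fin.sum_univ_three]
  push_cast
  linear_combination (p.2 1 : ℂ) ^ 2 * Complex.I_sq

lemma isHermitian_blochMatrix (p : ℝ × (Fin 3 → ℝ)) : (blochMatrix p).IsHermitian := by
  rw [blochMatrix_eq]
  ext i j
  fin_cases i <;> fin_cases j <;> simp [sub_eq_add_neg]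

lemma ker_blochMatrix : LinearMap.ker blochMatrix = ⊥ := by
  refine LinearMap.ker_eq_bot'.2 fun p hp => ?_
  have htime : p.1 = 0 := by simpa [hp] using trace_blochMatrix p
  have hspace : ∑ i, p.2 i ^ 2 = 0 := by
    have h := det_blochMatrix p
    rw [hp, htime, det_zero] at h
    simpa using (Complex.ofReal_eq_zero.1 h.symm)
  have hcoord : ∀ i, p.2 i = 0 := by
    simpa [Finset.sum_eq_zero_iff_of_nonneg, sq_nonneg] using hspace
  exact Prod.ext htime (funext hcoord)

lemma blochMatrix_mul_self {p : ℝ × (Fin 3 → ℝ)} (hcone : ∑ i, p.2 i ^ 2 = p.1 ^ 2) :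
    blochMatrix p * blochMatrix p = (2 * p.1) • blochMatrix p := by
  rw [Fin.sum_univ_three] at hcone
  rw [blochMatrix_eq]
  ext i j
  fin_cases i <;> fin_cases j <;> apply Complex.ext <;> simp [mul_apply] <;> linarith

theorem posSemidef_blochMatrix {p : ℝ × (Fin 3 → ℝ)} (hpos : 0 < p.1)
    (hcone : ∑ i, p.2 i ^ 2 = p.1 ^ 2) : (blochMatrix p).PosSemidef := by
  have hsq : blochMatrix p = (2 * p.1)⁻¹ • ((blochMatrix p)ᴴ * blochMatrix p) := by
    rw [(isHermitian_blochMatrix p).eq, blochMatrix_mul_self hcone, inv_smul_smul₀ (by positivity)]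
  rw [hsq]
  exact (posSemidef_conjTranspose_mul_self _).smul (by positivity)

lemma rank_blochMatrix {p : ℝ × (Fin 3 → ℝ)} (hne : p ≠ 0)
    (hcone : ∑ i, p.2 i ^ 2 = p.1 ^ 2) : (blochMatrix p).rank = 1 := by
  have hlt : (blochMatrix p).rank < 2 :=
    rank_lt_card_of_det_eq_zero (by rw [det_blochMatrix, hcone, sub_self, Complex.ofReal_zero])
  have hpos : (blochMatrix p).rank ≠ 0 := by
    rw [Ne, matrix_rank_eq_zero_iff, ← LinearMap.mem_ker, ker_blochMatrix]
    exact hne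
  lia

end Bloch

theorem stmt14_general {E : Type*} [Fintype E] (α : E → ℝ) (hα : ∀ e, 0 < α e)
    (hαsum : ∑ e, α e = 1) (n : E → Fin 3 → ℝ) (hunit : ∀ e, ∑ i, n e i ^ 2 = 1)
    (hbal : ∑ e, α e • n e = 0) (P : E → Matrix (Fin 2) (Fin 2) ℂ)
    (hPdef : ∀ e, P e = α e •
      (1 + (n e 0 : ℂ) • pauli1 + (n e 1 : ℂ) • pauli2 + (n e 2 : ℂ) • pauli3)) :
    IsPOVM P ∧ (IsExtremalPOVM P ↔ AffineIndependent ℝ n) := by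
  obtain rfl : P = fun e => blochMatrix (α e • (1, n e)) := funext fun e => by
    rw [hPdef, map_smul, blochMatrix_one_mk]
  have hcone : ∀ e, ∑ i, (α e • ((1 : ℝ), n e)).2 i ^ 2 = (α e • ((1 : ℝ), n e)).1 ^ 2 := by
    simp [mul_pow, ← Finset.mul_sum, hunit]
  have hne : ∀ e, α e • ((1 : ℝ), n e) ≠ 0 := fun e => by simp [(hα e).ne']
  have hsum : ∑ e, α e • ((1 : ℝ), n e) = (1, 0) := by
    simp [Prod.ext_iff, Prod.fst_sum, Prod.snd_sum, hαsum, hbal]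
  have hpovm : IsPOVM fun e => blochMatrix (α e • (1, n e)) :=
    ⟨fun e => posSemidef_blochMatrix (by simp [hα]) (hcone e),
      by rw [← map_sum, hsum, blochMatrix_one_zero]⟩
  refine ⟨hpovm, ?_⟩
  calc IsExtremalPOVM _ ↔ LinearIndependent ℝ fun e => blochMatrix (α e • (1, n e)) :=
        isExtremalPOVM_iff_linearIndependent hpovm fun e => rank_blochMatrix (hne e) (hcone e)
    _ ↔ LinearIndependent ℝ fun e => α e • ((1 : ℝ), n e) :=
        blochMatrix.linearIndependent_iff ker_blochMatrix
    _ ↔ LinearIndependent ℝ fun e => ((1 : ℝ), n e) :=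
        LinearIndependent.units_smul_iff _ fun e => Units.mk0 (α e) (hα e).ne'
    _ ↔ AffineIndependent ℝ n := linearIndependent_one_prodMk_iff

theorem stmt14 (α : Fin 4 → ℝ) (hα : ∀ e, 0 < α e) (hαsum : ∑ e, α e = 1)
    (n : Fin 4 → Fin 3 → ℝ) (hunit : ∀ e, ∑ i, n e i ^ 2 = 1)
    (hbal : ∑ e, α e • n e = 0)
    (P : Fin 4 → Matrix (Fin 2) (Fin 2) ℂ)
    (hPdef : ∀ e, P e = α e •
      (1 + (n e 0 : ℂ) • pauli1 + (n e 1 : ℂ) • pauli2 + (n e 2 : ℂ) • pauli3)) :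
    IsPOVM P ∧ (IsExtremalPOVM P ↔ Submodule.span ℝ (Set.range n) = ⊤) := by
  have hcard : Fintype.card (Fin 4) = Module.finrank ℝ (Fin 3 → ℝ) + 1 := by simp
  rw [← affineIndependent_iff_span_eq_top hcard
    (zero_mem_affineSpan_of_sum_smul_eq_zero hαsum hbal)]
  exact stmt14_general α hα hαsum n hunit hbal P hPdef
end

section
/- Let d ≥ 1, ω = exp(2πi/d), Z|j⟩ = |j⊕1⟩, W|j⟩ = ω^j|j⟩, and U_{pq} = Z^p W^q for p, q ∈ ℤ_d. For any matrix ν ∈ M_d(ℂ), the d² matrices {U_{pq} ν U_{pq}^† : p, q ∈ ℤ_d} span M_d(ℂ) over ℂ if and only if Tr(U_{rs}^† ν) ≠ 0 for all r, s ∈ ℤ_d. -/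
/-!
Conjugation by `U_{pq}` multiplies `U_{rs}` by the phase `ω ^ (r q - s p)`, so the `U_{rs}`, which
form a basis of `M_d(ℂ)` because they are orthogonal for `Tr (A† B)`, diagonalize all these
conjugations at once. As functions of `(p, q)` the phases are `d²` distinct characters of
`ℤ_d × ℤ_d`, hence linearly independent. A functional killing every `U_{pq} ν U_{pq}†` is thus a
vanishing combination of characters, whose coefficients are the products of the coordinates of `ν`
with the values of the functional on the basis. If no coordinate of `ν` vanishes, neither does such
a functional survive; if one does vanish, that coordinate is itself a nonzero functional killing
the span. The coordinates of `ν` are the traces `Tr (U_{rs}† ν)` up to the factor `d`.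
-/

open Matrix
open scoped ComplexOrder

/-- The cyclic shift matrix `Z` on `ℂ^d`: `Z|j⟩ = |j ⊕ 1⟩` (addition mod `d`). -/
noncomputable def shiftMat (d : ℕ) [NeZero d] : Matrix (ZMod d) (ZMod d) ℂ :=
  Matrix.of fun i j : ZMod d => if i = j + 1 then (1 : ℂ) else 0

/-- The phase multiplication matrix `W` on `ℂ^d`: `W|j⟩ = ω^j |j⟩` with `ω = exp(2πi/d)`. -/
noncomputable def multMat (d : ℕ) [NeZero d] : Matrix (ZMod d) (ZMod d) ℂ :=
  Matrix.diagonal fun j : ZMod d => Complex.exp (2 * Real.pi * Complex.I / d) ^ j.val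

/-- The shift-and-multiply unitaries `U_{pq} = Z^p W^q`. -/
noncomputable def shiftMult (d : ℕ) [NeZero d] (p q : ZMod d) : Matrix (ZMod d) (ZMod d) ℂ :=
  shiftMat d ^ p.val * multMat d ^ q.val

section SimultaneousEigenbasis

variable {ι κ : Type*}

section Semiring

variable {R M : Type*} [CommSemiring R] [AddCommMonoid M] [Module R M]

theorem repr_apply_of_apply_eq_smul (b : Module.Basis ι R M) {T : M →ₗ[R] M} {c : ι → R}
    (hT : ∀ i, T (b i) = c i • b i) (v : M) (i : ι) :
    b.repr (T v) i = c i * b.repr v i := by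
  have hcoord : b.coord i ∘ₗ T = c i • b.coord i := by
    refine b.ext fun j => ?_
    by_cases hij : j = i <;> simp [hT, hij]
  simpa using LinearMap.congr_fun hcoord v

theorem repr_ne_zero_of_span_range_apply_eq_top [Nontrivial R] (b : Module.Basis ι R M)
    {T : κ → M →ₗ[R] M} {c : ι → κ → R} (hT : ∀ k i, T k (b i) = c i k • b i) {v : M}
    (hspan : Submodule.span R (Set.range fun k => T k v) = ⊤) (i : ι) : b.repr v i ≠ 0 := by
  intro hi
  have hcoord : b.coord i = 0 := by
    refine LinearMap.ext_on_range hspan fun k => ?_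
    simp [repr_apply_of_apply_eq_smul b (hT k), hi]
  simpa using LinearMap.congr_fun hcoord (b i)

end Semiring

section Field

variable {K V : Type*} [Field K] [AddCommGroup V] [Module K V]

theorem span_range_apply_eq_top_of_repr_ne_zero [Finite ι] (b : Module.Basis ι K V)
    {T : κ → V →ₗ[K] V} {c : ι → κ → K} (hT : ∀ k i, T k (b i) = c i k • b i)
    (hc : LinearIndependent K c) {v : V} (hv : ∀ i, b.repr v i ≠ 0) :
    Submodule.span K (Set.range fun k => T k v) = ⊤ := by
  have := Fintype.ofFinite ι
  by_contra hspan
  obtain ⟨f, hf_ne, hf_ker⟩ := Submodule.exists_le_ker_of_lt_top _ (lt_top_iff_ne_top.2 hspan)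
  have hrel : ∑ i, (b.repr v i * f (b i)) • c i = 0 := by
    funext k
    have hk : f (T k v) = 0 := hf_ker (Submodule.subset_span ⟨k, rfl⟩)
    rw [← b.sum_repr (T k v), map_sum] at hk
    simpa [repr_apply_of_apply_eq_smul b (hT k), mul_comm, mul_left_comm] using hk
  have hf_basis : ∀ i, f (b i) = 0 := fun i =>
    (mul_eq_zero.1 (Fintype.linearIndependent_iff.1 hc _ hrel i)).resolve_left (hv i)
  exact hf_ne (b.ext hf_basis)

theorem span_range_apply_eq_top_iff [Finite ι] (b : Module.Basis ι K V) {T : κ → V →ₗ[K] V}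
    {c : ι → κ → K} (hT : ∀ k i, T k (b i) = c i k • b i) (hc : LinearIndependent K c) (v : V) :
    Submodule.span K (Set.range fun k => T k v) = ⊤ ↔ ∀ i, b.repr v i ≠ 0 :=
  ⟨repr_ne_zero_of_span_range_apply_eq_top b hT, span_range_apply_eq_top_of_repr_ne_zero b hT hc⟩

end Field

end SimultaneousEigenbasis

section ShiftMult

variable (d : ℕ) [NeZero d]

theorem shiftMat_pow_apply (n : ℕ) (i j : ZMod d) :
    (shiftMat d ^ n) i j = if i = j + n then 1 else 0 := by
  induction n generalizing j with
  | zero => simp [Matrix.one_apply]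
  | succ n ih =>
    have hshift : ∀ k, shiftMat d k j = if k = j + 1 then 1 else 0 := fun _ => rfl
    simp [pow_succ, Matrix.mul_apply, ih, hshift, add_assoc, add_comm (1 : ZMod d)]

theorem exp_pow_val_eq_stdAddChar (j : ZMod d) :
    Complex.exp (2 * Real.pi * Complex.I / d) ^ j.val = ZMod.stdAddChar j := by
  rw [ZMod.stdAddChar_apply, ZMod.toCircle_apply, ← Complex.exp_nat_mul]
  congr 1
  ring

theorem multMat_pow_val (q : ZMod d) :
    multMat d ^ q.val = Matrix.diagonal fun j => ZMod.stdAddChar (q * j) := by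
  rw [multMat, Matrix.diagonal_pow]
  congr 1 with j
  rw [Pi.pow_apply, exp_pow_val_eq_stdAddChar, ← AddChar.map_nsmul_eq_pow, nsmul_eq_mul,
    ZMod.natCast_zmod_val]

theorem shiftMult_apply (p q i j : ZMod d) :
    shiftMult d p q i j = if i = j + p then ZMod.stdAddChar (q * j) else 0 := by
  rw [shiftMult, multMat_pow_val, Matrix.mul_diagonal, shiftMat_pow_apply, ZMod.natCast_zmod_val,
    ite_mul, one_mul, zero_mul]

theorem shiftMult_mul_shiftMult (p q r s : ZMod d) :
    shiftMult d p q * shiftMult d r s =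
      ZMod.stdAddChar (q * r) • shiftMult d (p + r) (q + s) := by
  ext i j
  have hphase : ZMod.stdAddChar (q * (j + r)) * ZMod.stdAddChar (s * j) =
      ZMod.stdAddChar (q * r) * ZMod.stdAddChar ((q + s) * j) := by
    rw [← AddChar.map_add_eq_mul, ← AddChar.map_add_eq_mul]
    ring_nf
  simp [Matrix.mul_apply, shiftMult_apply, hphase, add_assoc, add_comm r]

theorem conjTranspose_shiftMult (p q : ZMod d) :
    (shiftMult d p q)ᴴ = ZMod.stdAddChar (p * q) • shiftMult d (-p) (-q) := by
  ext i j
  rw [Matrix.conjTranspose_apply, Matrix.smul_apply, shiftMult_apply, shiftMult_apply]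
  by_cases hij : j = i + p
  · have hphase : ZMod.stdAddChar (-(q * i)) =
        ZMod.stdAddChar (p * q) * ZMod.stdAddChar (-q * j) := by
      rw [← AddChar.map_add_eq_mul, hij]
      ring_nf
    rw [if_pos hij, if_pos (by rw [hij]; ring), smul_eq_mul, ← hphase, AddChar.map_neg_eq_conj,
      starRingEnd_apply]
  · rw [if_neg hij, if_neg fun h => hij (by rw [h]; ring), star_zero, smul_zero]

theorem trace_shiftMult (p q : ZMod d) :
    (shiftMult d p q).trace = if (p, q) = 0 then (d : ℂ) else 0 := by
  by_cases hp : p = 0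
  · simpa [Matrix.trace, shiftMult_apply, hp, mul_comm q, Prod.ext_iff, ZMod.card] using
      AddChar.sum_mulShift q (ZMod.isPrimitive_stdAddChar d)
  · simp [Matrix.trace, shiftMult_apply, hp]

theorem trace_conjTranspose_shiftMult_mul_shiftMult (x y : ZMod d × ZMod d) :
    ((shiftMult d x.1 x.2)ᴴ * shiftMult d y.1 y.2).trace = if x = y then (d : ℂ) else 0 := by
  have hdiff : (-x.1 + y.1, -x.2 + y.2) = 0 ↔ x = y := by
    rw [Prod.mk_eq_zero, neg_add_eq_zero, neg_add_eq_zero, Prod.ext_iff]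
  simp only [conjTranspose_shiftMult, Matrix.smul_mul, shiftMult_mul_shiftMult, smul_smul,
    Matrix.trace_smul, trace_shiftMult, hdiff, ← AddChar.map_add_eq_mul]
  by_cases hxy : x = y
  · subst hxy
    simp [mul_comm x.1]
  · simp [hxy]

theorem linearIndependent_shiftMult :
    LinearIndependent ℂ fun x : ZMod d × ZMod d => shiftMult d x.1 x.2 := by
  have hd : (d : ℂ) ≠ 0 := NeZero.ne _
  refine LinearIndependent.of_pairwise_dual_eq_zero_one _
    (fun x => (d : ℂ)⁻¹ • Matrix.traceLinearMap (ZMod d) ℂ ℂ ∘ₗ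
      LinearMap.mulLeft ℂ (shiftMult d x.1 x.2)ᴴ) (fun x y hxy => ?_) fun x => ?_
  · simp [trace_conjTranspose_shiftMult_mul_shiftMult, hxy]
  · simp [trace_conjTranspose_shiftMult_mul_shiftMult, hd]

/-- The basis of `M_d(ℂ)` formed by the shift-and-multiply unitaries `U_{rs}`, indexed by the
pairs `(r, s)`. -/
noncomputable def shiftMultBasis :
    Module.Basis (ZMod d × ZMod d) ℂ (Matrix (ZMod d) (ZMod d) ℂ) :=
  basisOfLinearIndependentOfCardEqFinrank (linearIndependent_shiftMult d)
    (by simp [Module.finrank_matrix])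

theorem shiftMultBasis_apply (x : ZMod d × ZMod d) :
    shiftMultBasis d x = shiftMult d x.1 x.2 := by
  simp [shiftMultBasis]

theorem trace_conjTranspose_shiftMult_mul (x : ZMod d × ZMod d) (A : Matrix (ZMod d) (ZMod d) ℂ) :
    ((shiftMult d x.1 x.2)ᴴ * A).trace = d * (shiftMultBasis d).repr A x := by
  conv_lhs => rw [← (shiftMultBasis d).sum_repr A]
  simp [Matrix.mul_sum, Matrix.trace_sum, shiftMultBasis_apply,
    trace_conjTranspose_shiftMult_mul_shiftMult, mul_comm]

/-- The character `(p, q) ↦ ω ^ (r q - s p)` of `ℤ_d × ℤ_d` attached to `x = (r, s)`: the phase by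
which conjugation by `U_{pq}` multiplies `U_{rs}`. -/
noncomputable def symplecticChar (x : ZMod d × ZMod d) : AddChar (ZMod d × ZMod d) ℂ :=
  ZMod.stdAddChar.compAddMonoidHom
    ((AddMonoidHom.mulLeft x.1).comp (AddMonoidHom.snd _ _) -
      (AddMonoidHom.mulLeft x.2).comp (AddMonoidHom.fst _ _))

theorem symplecticChar_apply (x y : ZMod d × ZMod d) :
    symplecticChar d x y = ZMod.stdAddChar (x.1 * y.2 - x.2 * y.1) :=
  rfl

theorem symplecticChar_injective : Function.Injective (symplecticChar d) := by
  intro x y hxy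
  have hval : ∀ z : ZMod d × ZMod d, x.1 * z.2 - x.2 * z.1 = y.1 * z.2 - y.2 * z.1 := fun z =>
    ZMod.injective_stdAddChar (DFunLike.congr_fun hxy z)
  ext
  · simpa using hval (0, 1)
  · simpa using hval (1, 0)

theorem linearIndependent_symplecticChar :
    LinearIndependent ℂ fun x : ZMod d × ZMod d => ⇑(symplecticChar d x) :=
  (AddChar.linearIndependent (ZMod d × ZMod d) ℂ).comp _ (symplecticChar_injective d)

theorem shiftMult_mul_shiftMultBasis_mul_conjTranspose (y x : ZMod d × ZMod d) :
    shiftMult d y.1 y.2 * shiftMultBasis d x * (shiftMult d y.1 y.2)ᴴ =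
      symplecticChar d x y • shiftMultBasis d x := by
  simp only [shiftMultBasis_apply, symplecticChar_apply, conjTranspose_shiftMult,
    shiftMult_mul_shiftMult, Matrix.smul_mul, Matrix.mul_smul, smul_smul,
    ← AddChar.map_add_eq_mul]
  congr 2 <;> ring

end ShiftMult

theorem stmt17 (d : ℕ) [NeZero d] (ν : Matrix (ZMod d) (ZMod d) ℂ) :
    Submodule.span ℂ (Set.range fun pq : ZMod d × ZMod d =>
        shiftMult d pq.1 pq.2 * ν * (shiftMult d pq.1 pq.2)ᴴ) = ⊤ ↔
      ∀ r s : ZMod d, ((shiftMult d r s)ᴴ * ν).trace ≠ 0 := by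
  have hd : (d : ℂ) ≠ 0 := NeZero.ne _
  have htrace : ∀ r s, ((shiftMult d r s)ᴴ * ν).trace ≠ 0 ↔ (shiftMultBasis d).repr ν (r, s) ≠ 0 :=
    fun r s => by simp [trace_conjTranspose_shiftMult_mul d (r, s), hd]
  have hspan := span_range_apply_eq_top_iff (shiftMultBasis d)
    (T := fun y => LinearMap.mulLeftRight ℂ (shiftMult d y.1 y.2, (shiftMult d y.1 y.2)ᴴ))
    (by simpa using shiftMult_mul_shiftMultBasis_mul_conjTranspose d)
    (linearIndependent_symplecticChar d) ν
  simpa [htrace] using hspan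
end

section
/- Let P be a POVM with finite outcome set E, |E| = N, on ℂ^d. For each e ∈ E let Z_e be the orthogonal projection onto range(P_e) and let M_e = {A ∈ M_d(ℂ) : Z_e A Z_e = A}. Let b(P) denote the real dimension of the perturbation space V(P) = {D : E → M_d(ℂ) : each D_e is Hermitian, Z_e D_e Z_e = D_e for all e, and ∑_{e∈E} D_e = 0}. Then b(P) = ∑_{e∈E} (rank P_e)² − dim_ℂ(∑_{e∈E} M_e), and P belongs to the frontier of the set of POVMs relative to the affine subspace H of Hermitian families summing to I if and only if b(P) < d²(N − 1). -/
/-!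
`V(P)` is the self-adjoint part of the star-stable complex space `K` of zero-sum families in
`∏ e, M_e`, hence a real form of it, so that `dim_ℝ V(P) = dim_ℂ K`. Rank-nullity for the
summation map `∏ e, M_e → ∑ e, M_e`, whose kernel is `K`, together with
`M_e ≃ End (range Z_e)` gives the dimension formula.

A POVM is interior relative to `H` exactly when all its elements are positive definite:
positive definiteness is stable under small Hermitian perturbations, and conversely, if `P` is
interior then for two outcomes `e ≠ f` and a small `t > 0` moving `t • 1` from `e` to `f` leaves
`P e - t • 1` positive semidefinite. Positive definiteness of all `P e` means that all `Z_e` are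
`1`, and this is the case exactly when `V(P)` is the full direction space of `H`, of dimension
`d² (N - 1)`.
-/

open Matrix
open scoped ComplexOrder

/-- The set of families of Hermitian matrices summing to the identity. -/
def HermFamilies (d : ℕ) (E : Type*) [Fintype E] : Set (E → Matrix (Fin d) (Fin d) ℂ) :=
  {F | (∀ e, (F e).IsHermitian) ∧ ∑ e, F e = 1}

/-- The "corner" space `M = {A : Z A Z = A}` of a projection `Z`, as a complex subspace
of `M_d(ℂ)`. -/
noncomputable def cornerSpace {d : ℕ} (Z : Matrix (Fin d) (Fin d) ℂ) :
    Submodule ℂ (Matrix (Fin d) (Fin d) ℂ) where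
  carrier := {A | Z * A * Z = A}
  add_mem' := by
    intro a b ha hb
    simp only [Set.mem_setOf_eq] at *
    rw [mul_add, add_mul, ha, hb]
  zero_mem' := by simp
  smul_mem' := by
    intro c a ha
    simp only [Set.mem_setOf_eq] at *
    rw [mul_smul_comm, smul_mul_assoc, ha]

/-- The real vector space of perturbations of a POVM whose elements are supported on the
subspaces determined by the projections `Z e`: families of Hermitian matrices `D e`
with `Z e * D e * Z e = D e` and `∑ e, D e = 0`. -/
noncomputable def pertSpace {d : ℕ} {E : Type*} [Fintype E] (Z : E → Matrix (Fin d) (Fin d) ℂ) :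
    Submodule ℝ (E → Matrix (Fin d) (Fin d) ℂ) where
  carrier := {D | (∀ e, (D e).IsHermitian) ∧ (∀ e, Z e * D e * Z e = D e) ∧ ∑ e, D e = 0}
  add_mem' := by
    rintro a b ⟨ha1, ha2, ha3⟩ ⟨hb1, hb2, hb3⟩
    refine ⟨fun e => (ha1 e).add (hb1 e), fun e => ?_, ?_⟩
    · rw [Pi.add_apply, mul_add, add_mul, ha2 e, hb2 e]
    · simp only [Pi.add_apply]
      rw [Finset.sum_add_distrib, ha3, hb3, add_zero]
  zero_mem' := by
    refine ⟨fun e => ?_, fun e => by simp, by simp⟩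
    simp [Matrix.IsHermitian]
  smul_mem' := by
    rintro c a ⟨ha1, ha2, ha3⟩
    refine ⟨fun e => ?_, fun e => ?_, ?_⟩
    · show ((c • a) e)ᴴ = (c • a) e
      rw [Pi.smul_apply, Matrix.conjTranspose_smul, star_trivial, ha1 e]
    · rw [Pi.smul_apply, mul_smul_comm, smul_mul_assoc, ha2 e]
    · simp only [Pi.smul_apply]
      rw [← Finset.smul_sum, ha3, smul_zero]

section ZeroSumFamilies

variable {𝕜 V W ι : Type*} [Field 𝕜] [AddCommGroup V] [Module 𝕜 V] [AddCommGroup W] [Module 𝕜 W]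

lemma finrank_map_add_finrank_inf_ker (L : V →ₗ[𝕜] W) (S : Submodule 𝕜 V)
    [FiniteDimensional 𝕜 S] :
    Module.finrank 𝕜 (S.map L) + Module.finrank 𝕜 ↥(S ⊓ LinearMap.ker L) = Module.finrank 𝕜 S := by
  rw [← LinearMap.finrank_range_add_finrank_ker (L.domRestrict S), LinearMap.range_domRestrict,
    LinearMap.ker_domRestrict, ← Submodule.map_comap_subtype, Submodule.finrank_map_subtype_eq]

lemma finrank_pi_univ [Fintype ι] {V : ι → Type*} [∀ i, AddCommGroup (V i)] [∀ i, Module 𝕜 (V i)]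
    (p : ∀ i, Submodule 𝕜 (V i)) [∀ i, FiniteDimensional 𝕜 (p i)] :
    Module.finrank 𝕜 (Submodule.pi Set.univ p) = ∑ i, Module.finrank 𝕜 (p i) := by
  let φ : Submodule.pi Set.univ p ≃ₗ[𝕜] ∀ i, p i :=
    { toFun := fun x i => ⟨x.1 i, x.2 i trivial⟩
      invFun := fun y => ⟨fun i => y i, fun i _ => (y i).2⟩
      map_add' := fun _ _ => rfl
      map_smul' := fun _ _ => rfl }
  rw [φ.finrank_eq, Module.finrank_pi_fintype]

/-- The space of families `x` with `x i ∈ p i` for all `i` and `∑ i, x i = 0`: the relations between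
the subspaces `p i`. -/
def zeroSumFamilies [Fintype ι] (p : ι → Submodule 𝕜 V) : Submodule 𝕜 (ι → V) :=
  Submodule.pi Set.univ p ⊓ LinearMap.ker (∑ i, LinearMap.proj i : (ι → V) →ₗ[𝕜] V)

lemma mem_zeroSumFamilies [Fintype ι] {p : ι → Submodule 𝕜 V} {x : ι → V} :
    x ∈ zeroSumFamilies p ↔ (∀ i, x i ∈ p i) ∧ ∑ i, x i = 0 := by
  simp [zeroSumFamilies]

lemma map_sum_proj_pi_univ [Fintype ι] (p : ι → Submodule 𝕜 V) :
    (Submodule.pi Set.univ p).map (∑ i, LinearMap.proj i : (ι → V) →ₗ[𝕜] V) = ⨆ i, p i := by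
  classical
  have sum_proj_comp_single (i : ι) :
      (∑ j, LinearMap.proj j : (ι → V) →ₗ[𝕜] V) ∘ₗ LinearMap.single 𝕜 (fun _ => V) i = .id := by
    ext x
    simp
  simp only [← Submodule.iSup_map_single, Submodule.map_iSup, ← Submodule.map_comp,
    sum_proj_comp_single, Submodule.map_id]

lemma finrank_iSup_add_finrank_zeroSumFamilies [Fintype ι] [FiniteDimensional 𝕜 V]
    (p : ι → Submodule 𝕜 V) :
    Module.finrank 𝕜 ↥(⨆ i, p i) + Module.finrank 𝕜 (zeroSumFamilies p) =
      ∑ i, Module.finrank 𝕜 (p i) := by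
  rw [← map_sum_proj_pi_univ, zeroSumFamilies, finrank_map_add_finrank_inf_ker, finrank_pi_univ]

end ZeroSumFamilies

section RealForm

variable {A : Type*} [AddCommGroup A] [Module ℂ A] [StarAddMonoid A] [StarModule ℂ A]

open scoped ComplexStarModule

/-- The self-adjoint elements of a complex subspace, as a real subspace. It is a real form of the
subspace when the latter is closed under `star`. -/
noncomputable def selfAdjointIn (K : Submodule ℂ A) : Submodule ℝ A :=
  K.restrictScalars ℝ ⊓ selfAdjoint.submodule ℝ A

lemma mem_selfAdjointIn {K : Submodule ℂ A} {a : A} :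
    a ∈ selfAdjointIn K ↔ a ∈ K ∧ IsSelfAdjoint a :=
  Iff.rfl

lemma realPart_mem_selfAdjointIn {K : Submodule ℂ A} (hK : ∀ a ∈ K, star a ∈ K) {a : A}
    (ha : a ∈ K) : (ℜ a : A) ∈ selfAdjointIn K := by
  refine ⟨?_, (ℜ a).2⟩
  rw [realPart_apply_coe]
  exact (K.restrictScalars ℝ).smul_mem _ (K.add_mem ha (hK a ha))

lemma imaginaryPart_mem_selfAdjointIn {K : Submodule ℂ A} (hK : ∀ a ∈ K, star a ∈ K) {a : A}
    (ha : a ∈ K) : (ℑ a : A) ∈ selfAdjointIn K := by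
  rw [← neg_neg (ℑ a), ← realPart_I_smul, NegMemClass.coe_neg]
  exact neg_mem (realPart_mem_selfAdjointIn hK (K.smul_mem _ ha))

/-- The decomposition of a star-stable complex subspace into real and imaginary parts, with
`(a, b)` standing for `a + i b`. -/
noncomputable def selfAdjointInProdEquiv (K : Submodule ℂ A) (hK : ∀ a ∈ K, star a ∈ K) :
    (selfAdjointIn K × selfAdjointIn K) ≃ₗ[ℝ] K where
  toFun x := ⟨x.1 + Complex.I • (x.2 : A), K.add_mem x.1.2.1 (K.smul_mem _ x.2.2.1)⟩
  invFun a := (⟨ℜ (a : A), realPart_mem_selfAdjointIn hK a.2⟩,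
    ⟨ℑ (a : A), imaginaryPart_mem_selfAdjointIn hK a.2⟩)
  map_add' x y := by
    ext
    simp only [Prod.fst_add, Prod.snd_add, Submodule.coe_add]
    module
  map_smul' c x := by
    ext
    simp only [Prod.smul_fst, Prod.smul_snd, Submodule.coe_smul_of_tower, RingHom.id_apply,
      smul_add, smul_comm c Complex.I]
  left_inv := by
    rintro ⟨⟨a, -, ha⟩, ⟨b, -, hb⟩⟩
    ext <;> simp [ha.coe_realPart, ha.imaginaryPart, hb.coe_realPart, hb.imaginaryPart]
  right_inv a := Subtype.ext (realPart_add_I_smul_imaginaryPart (a : A))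

lemma finrank_selfAdjointIn (K : Submodule ℂ A) [FiniteDimensional ℂ K]
    (hK : ∀ a ∈ K, star a ∈ K) : Module.finrank ℝ (selfAdjointIn K) = Module.finrank ℂ K := by
  have : FiniteDimensional ℝ (K.restrictScalars ℝ) := FiniteDimensional.complexToReal K
  have : FiniteDimensional ℝ (selfAdjointIn K) := Submodule.finiteDimensional_of_le inf_le_left
  have h := (selfAdjointInProdEquiv K hK).finrank_eq
  rw [Module.finrank_prod, finrank_real_of_complex] at h
  lia

end RealForm

section CornerSpace

variable {d : ℕ} {Z A : Matrix (Fin d) (Fin d) ℂ}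

lemma mem_cornerSpace : A ∈ cornerSpace Z ↔ Z * A * Z = A :=
  Iff.rfl

lemma cornerSpace_one : cornerSpace (1 : Matrix (Fin d) (Fin d) ℂ) = ⊤ :=
  eq_top_iff.mpr fun A _ => by simp [mem_cornerSpace]

lemma conjTranspose_mem_cornerSpace (hZ : Z.IsHermitian) (hA : A ∈ cornerSpace Z) :
    Aᴴ ∈ cornerSpace Z := by
  simpa [mem_cornerSpace, hZ.eq, mul_assoc] using congrArg conjTranspose (mem_cornerSpace.mp hA)

lemma mulVec_eq_self_of_mem_range (hZ : IsIdempotentElem Z) {v : Fin d → ℂ}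
    (hv : v ∈ LinearMap.range Z.mulVecLin) : Z *ᵥ v = v := by
  obtain ⟨w, rfl⟩ := hv
  rw [mulVecLin_apply, mulVec_mulVec, hZ.eq]

lemma rangeRestrict_mulVecLin_coe (hZ : IsIdempotentElem Z)
    (v : LinearMap.range Z.mulVecLin) : Z.mulVecLin.rangeRestrict v = v :=
  Subtype.ext (mulVec_eq_self_of_mem_range hZ v.2)

lemma toMatrix'_mem_cornerSpace (hZ : IsIdempotentElem Z)
    (f : Module.End ℂ (LinearMap.range Z.mulVecLin)) :
    LinearMap.toMatrix' ((LinearMap.range Z.mulVecLin).subtype ∘ₗ f ∘ₗ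
      Z.mulVecLin.rangeRestrict) ∈ cornerSpace Z := by
  refine mem_cornerSpace.mpr (toLin'.injective (LinearMap.ext fun v => ?_))
  have hv : Z.mulVecLin.rangeRestrict (Z *ᵥ v) = Z.mulVecLin.rangeRestrict v :=
    rangeRestrict_mulVecLin_coe hZ (Z.mulVecLin.rangeRestrict v)
  simp only [toLin'_mul, toLin'_toMatrix', LinearMap.comp_apply, toLin'_apply, hv,
    Submodule.subtype_apply]
  exact mulVec_eq_self_of_mem_range hZ (f _).2

/-- The matrices of the corner of an idempotent `Z` are the endomorphisms of the range of `Z`,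
extended by zero on the kernel of `Z`. -/
noncomputable def cornerSpaceEquivEnd (hZ : IsIdempotentElem Z) :
    cornerSpace Z ≃ₗ[ℂ] Module.End ℂ (LinearMap.range Z.mulVecLin) where
  toFun A := Z.mulVecLin.rangeRestrict ∘ₗ A.1.mulVecLin ∘ₗ (LinearMap.range Z.mulVecLin).subtype
  invFun f :=
    ⟨LinearMap.toMatrix' ((LinearMap.range Z.mulVecLin).subtype ∘ₗ f ∘ₗ
      Z.mulVecLin.rangeRestrict), toMatrix'_mem_cornerSpace hZ f⟩
  map_add' A B := by
    rw [Submodule.coe_add, mulVecLin_add, LinearMap.add_comp, LinearMap.comp_add]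
  map_smul' c A := by
    ext x
    simp
  left_inv A := by
    refine Subtype.ext (toLin'.injective (LinearMap.ext fun v => ?_))
    rw [toLin'_toMatrix', toLin'_apply]
    change Z *ᵥ (A.1 *ᵥ (Z *ᵥ v)) = A.1 *ᵥ v
    rw [mulVec_mulVec, mulVec_mulVec, mem_cornerSpace.mp A.2]
  right_inv f := LinearMap.ext fun v => by
    change Z.mulVecLin.rangeRestrict (LinearMap.toMatrix' ((LinearMap.range Z.mulVecLin).subtype ∘ₗ
      f ∘ₗ Z.mulVecLin.rangeRestrict) *ᵥ (v : Fin d → ℂ)) = f v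
    rw [LinearMap.toMatrix'_mulVec, LinearMap.comp_apply, LinearMap.comp_apply,
      rangeRestrict_mulVecLin_coe hZ]
    exact rangeRestrict_mulVecLin_coe hZ (f v)

lemma finrank_cornerSpace (hZ : IsIdempotentElem Z) :
    Module.finrank ℂ (cornerSpace Z) = Z.rank ^ 2 := by
  rw [(cornerSpaceEquivEnd hZ).finrank_eq, Module.finrank_linearMap, sq, Matrix.rank]

end CornerSpace

section PertSpace

variable {d : ℕ} {E : Type*} [Fintype E] {Z : E → Matrix (Fin d) (Fin d) ℂ}

lemma pertSpace_eq_selfAdjointIn (Z : E → Matrix (Fin d) (Fin d) ℂ) :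
    pertSpace Z = selfAdjointIn (zeroSumFamilies fun e => cornerSpace (Z e)) := by
  ext D
  rw [mem_selfAdjointIn, mem_zeroSumFamilies, IsSelfAdjoint, funext_iff]
  exact and_comm

lemma finrank_pertSpace_add (hZherm : ∀ e, (Z e).IsHermitian)
    (hZidem : ∀ e, IsIdempotentElem (Z e)) :
    Module.finrank ℝ (pertSpace Z) + Module.finrank ℂ ↥(⨆ e, cornerSpace (Z e)) =
      ∑ e, (Z e).rank ^ 2 := by
  have star_mem : ∀ D ∈ zeroSumFamilies fun e => cornerSpace (Z e),
      star D ∈ zeroSumFamilies fun e => cornerSpace (Z e) := by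
    simp only [mem_zeroSumFamilies]
    rintro D ⟨hDZ, hD⟩
    refine ⟨fun e => conjTranspose_mem_cornerSpace (hZherm e) (hDZ e), ?_⟩
    simpa [star_sum] using congrArg star hD
  rw [pertSpace_eq_selfAdjointIn, finrank_selfAdjointIn _ star_mem, add_comm,
    finrank_iSup_add_finrank_zeroSumFamilies]
  exact Finset.sum_congr rfl fun e _ => finrank_cornerSpace (hZidem e)

lemma finrank_pertSpace_one :
    Module.finrank ℝ (pertSpace (1 : E → Matrix (Fin d) (Fin d) ℂ)) =
      d ^ 2 * (Fintype.card E - 1) := by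
  cases isEmpty_or_nonempty E
  · simp [Module.finrank_zero_of_subsingleton]
  have hsup : ⨆ e : E, cornerSpace ((1 : E → Matrix (Fin d) (Fin d) ℂ) e) = ⊤ := by
    simp only [Pi.one_apply, cornerSpace_one, ciSup_const]
  have h := finrank_pertSpace_add (Z := (1 : E → Matrix (Fin d) (Fin d) ℂ))
    (fun _ => isHermitian_one) (fun _ => .one)
  rw [hsup] at h
  simp only [finrank_top, Module.finrank_matrix, Fintype.card_fin, Module.finrank_self,
    mul_one, Pi.one_apply, rank_one, Finset.sum_const, Finset.card_univ, smul_eq_mul] at h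
  rw [Nat.mul_sub, mul_one, mul_comm, ← h, sq, Nat.add_sub_cancel]

lemma single_sub_single_mem_pertSpace_one [DecidableEq E] {X : Matrix (Fin d) (Fin d) ℂ}
    (hX : X.IsHermitian) (e f : E) :
    Pi.single e X - Pi.single f X ∈ pertSpace (1 : E → Matrix (Fin d) (Fin d) ℂ) := by
  have isHermitian_single (g h : E) :
      ((Pi.single g X : E → Matrix (Fin d) (Fin d) ℂ) h).IsHermitian := by
    obtain rfl | hgh := eq_or_ne h g
    · simpa using hX
    · simp [hgh]
  exact ⟨fun g => (isHermitian_single e g).sub (isHermitian_single f g), fun g => by simp,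
    by simp⟩

lemma pertSpace_lt_pertSpace_one (hZherm : ∀ e, (Z e).IsHermitian)
    (hZidem : ∀ e, IsIdempotentElem (Z e)) {e f : E} (hef : e ≠ f) (he : Z e ≠ 1) :
    pertSpace Z < pertSpace 1 := by
  classical
  refine SetLike.lt_iff_le_and_exists.mpr ⟨fun D hD => ⟨hD.1, fun e => by simp, hD.2.2⟩, _,
    single_sub_single_mem_pertSpace_one (isHermitian_one.sub (hZherm e)) e f, fun hmem => he ?_⟩
  have hcorner := hmem.2.1 e
  simp only [Pi.sub_apply, Pi.single_eq_same, Pi.single_eq_of_ne hef, sub_zero,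
    (hZidem e).mul_one_sub_self, zero_mul] at hcorner
  exact (sub_eq_zero.mp hcorner.symm).symm

end PertSpace

section PosDef

variable {n 𝕜 : Type*} [RCLike 𝕜] {A Z : Matrix n n 𝕜}

open scoped Topology

/-- By homogeneity it suffices to control the quadratic form on the compact unit sphere. -/
lemma eventually_posDef [Finite n] (hA : A.PosDef) : ∀ᶠ B in 𝓝 A, B.IsHermitian → B.PosDef := by
  cases nonempty_fintype n
  have pos_on_sphere : ∀ᶠ B in 𝓝 A, ∀ x ∈ Metric.sphere (0 : n → 𝕜) 1,
      0 < RCLike.re (star x ⬝ᵥ (B *ᵥ x)) := by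
    refine (isCompact_sphere _ _).eventually_forall_of_forall_eventually fun x hx => ?_
    have hx0 : x ≠ 0 := ne_zero_of_mem_unit_sphere ⟨x, hx⟩
    have hcont : Continuous fun z : Matrix n n 𝕜 × (n → 𝕜) =>
        RCLike.re (star z.2 ⬝ᵥ (z.1 *ᵥ z.2)) := by fun_prop
    exact hcont.continuousAt.eventually_const_lt
      (RCLike.pos_iff.mp (hA.dotProduct_mulVec_pos hx0)).1
  filter_upwards [pos_on_sphere] with B hB hherm
  refine .of_dotProduct_mulVec_pos hherm fun x hx => ?_
  have hn : 0 < ‖x‖ := norm_pos_iff.mpr hx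
  have hunit := hB ((‖x‖⁻¹ : ℝ) • x) (by simp [norm_smul, hn.ne'])
  simp only [star_smul, star_trivial, smul_dotProduct, mulVec_smul, dotProduct_smul,
    RCLike.smul_re] at hunit
  have hinv : 0 < ‖x‖⁻¹ := inv_pos.mpr hn
  exact RCLike.pos_iff.mpr ⟨(mul_pos_iff_of_pos_left hinv).mp
    ((mul_pos_iff_of_pos_left hinv).mp hunit), hherm.im_star_dotProduct_mulVec_self x⟩

lemma posDef_iff_eq_one_of_range_eq [Fintype n] [DecidableEq n] (hA : A.PosSemidef)
    (hZ : IsIdempotentElem Z)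
    (hrange : LinearMap.range Z.mulVecLin = LinearMap.range A.mulVecLin) :
    A.PosDef ↔ Z = 1 := by
  have isUnit_iff (B : Matrix n n 𝕜) : IsUnit B ↔ LinearMap.range B.mulVecLin = ⊤ := by
    rw [LinearMap.range_eq_top]
    exact mulVec_surjective_iff_isUnit.symm
  rw [hA.posDef_iff_isUnit, isUnit_iff, ← hrange, ← isUnit_iff]
  exact ⟨fun h => (IsIdempotentElem.iff_eq_one_of_isUnit h).mp hZ, fun h => h ▸ isUnit_one⟩

end PosDef

section Frontier

variable {d : ℕ} {E : Type*} [Fintype E]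

open scoped Topology

lemma IsPOVM.nontrivial_of_not_posDef {P : E → Matrix (Fin d) (Fin d) ℂ} (hP : IsPOVM P) {e : E}
    (he : ¬ (P e).PosDef) : Nontrivial E := by
  by_contra hE
  rw [not_nontrivial_iff_subsingleton] at hE
  have hPe : P e = 1 := by rw [← hP.2, Fintype.sum_subsingleton _ e]
  exact he (hPe ▸ .one)

lemma mem_interior_isPOVM_of_posDef {P : HermFamilies d E} (hP : ∀ e, (P.1 e).PosDef) :
    P ∈ interior {Q : HermFamilies d E | IsPOVM Q.1} := by
  have hposDef : ∀ᶠ Q in 𝓝 P, ∀ e, (Q.1 e).IsHermitian → (Q.1 e).PosDef :=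
    Filter.eventually_all.mpr fun e =>
      ((continuous_apply e).comp continuous_subtype_val).continuousAt.eventually
        (eventually_posDef (hP e))
  rw [mem_interior_iff_mem_nhds]
  filter_upwards [hposDef] with Q hQ
  exact ⟨fun e => (hQ e (Q.2.1 e)).posSemidef, Q.2.2⟩

lemma add_mem_hermFamilies {F D : E → Matrix (Fin d) (Fin d) ℂ} (hF : F ∈ HermFamilies d E)
    (hD : D ∈ pertSpace 1) : F + D ∈ HermFamilies d E :=
  ⟨fun e => (hF.1 e).add (hD.1 e), by simp [Finset.sum_add_distrib, hF.2, hD.2.2]⟩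

lemma exists_pos_isPOVM_add_smul {P : HermFamilies d E}
    (hP : P ∈ interior {Q : HermFamilies d E | IsPOVM Q.1})
    {D : E → Matrix (Fin d) (Fin d) ℂ} (hD : D ∈ pertSpace 1) :
    ∃ t : ℝ, 0 < t ∧ IsPOVM (P.1 + t • D) := by
  let γ : ℝ → HermFamilies d E := fun t =>
    ⟨P.1 + t • D, add_mem_hermFamilies P.2 ((pertSpace 1).smul_mem t hD)⟩
  have hγ : Filter.Tendsto γ (𝓝[>] 0) (𝓝 P) := by
    have hcont : Continuous γ := Continuous.subtype_mk (by fun_prop) _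
    simpa [γ] using (hcont.tendsto 0).mono_left nhdsWithin_le_nhds
  have hpos : ∀ᶠ t : ℝ in 𝓝[>] 0, 0 < t := self_mem_nhdsWithin
  exact (hpos.and (hγ (mem_interior_iff_mem_nhds.mp hP))).exists

lemma posDef_of_mem_interior_isPOVM {P : HermFamilies d E}
    (hP : P ∈ interior {Q : HermFamilies d E | IsPOVM Q.1}) (e : E) : (P.1 e).PosDef := by
  classical
  by_contra hPe
  have isPOVM_P : IsPOVM P.1 :=
    interior_subset (s := {Q : HermFamilies d E | IsPOVM Q.1}) hP
  have := isPOVM_P.nontrivial_of_not_posDef hPe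
  obtain ⟨f, hf⟩ := exists_ne e
  obtain ⟨t, ht, hPOVM⟩ := exists_pos_isPOVM_add_smul hP
    (single_sub_single_mem_pertSpace_one isHermitian_one f e)
  have hsub : (P.1 e - t • 1).PosSemidef := by
    simpa [hf.symm, ← sub_eq_add_neg] using hPOVM.1 e
  apply hPe
  rw [← sub_add_cancel (P.1 e) (t • 1)]
  exact .posSemidef_add hsub (PosDef.one.smul ht)

lemma mem_interior_isPOVM_iff {P : HermFamilies d E} :
    P ∈ interior {Q : HermFamilies d E | IsPOVM Q.1} ↔ ∀ e, (P.1 e).PosDef :=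
  ⟨posDef_of_mem_interior_isPOVM, mem_interior_isPOVM_of_posDef⟩

lemma mem_frontier_isPOVM_iff {P : HermFamilies d E} (hP : IsPOVM P.1) :
    P ∈ frontier {Q : HermFamilies d E | IsPOVM Q.1} ↔ ∃ e, ¬ (P.1 e).PosDef := by
  rw [frontier, Set.mem_sdiff, mem_interior_isPOVM_iff, not_forall]
  exact and_iff_right (subset_closure hP)

end Frontier

theorem stmt19 {d N : ℕ} (hd : 1 ≤ d) {E : Type*} [Fintype E]
    (hN : Fintype.card E = N)
    (P : E → Matrix (Fin d) (Fin d) ℂ) (hP : IsPOVM P)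
    (Z : E → Matrix (Fin d) (Fin d) ℂ)
    (hZherm : ∀ e, (Z e).IsHermitian) (hZidem : ∀ e, Z e * Z e = Z e)
    (hZrange : ∀ e, LinearMap.range (Z e).mulVecLin = LinearMap.range (P e).mulVecLin)
    (hPH : P ∈ HermFamilies d E) :
    Module.finrank ℝ ↥(pertSpace Z) =
      (∑ e, (P e).rank ^ 2) - Module.finrank ℂ ↥(⨆ e, cornerSpace (Z e)) ∧
    ((⟨P, hPH⟩ : HermFamilies d E) ∈
        frontier {Q : HermFamilies d E | IsPOVM (Q : E → Matrix (Fin d) (Fin d) ℂ)} ↔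
      Module.finrank ℝ ↥(pertSpace Z) < d ^ 2 * (N - 1)) := by
  refine ⟨?_, ?_⟩
  · have hrank (e : E) : (Z e).rank = (P e).rank := by rw [rank, rank, hZrange e]
    simp only [← hrank, ← finrank_pertSpace_add hZherm hZidem, Nat.add_sub_cancel]
  rw [mem_frontier_isPOVM_iff hP, ← hN, ← finrank_pertSpace_one]
  by_cases hpd : ∀ e, (P e).PosDef
  · have hZ : Z = 1 :=
      funext fun e => (posDef_iff_eq_one_of_range_eq (hP.1 e) (hZidem e) (hZrange e)).mp (hpd e)
    subst hZ
    simp [hpd]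
  · obtain ⟨e, he⟩ := not_forall.mp hpd
    have hZe : Z e ≠ 1 :=
      mt (posDef_iff_eq_one_of_range_eq (hP.1 e) (hZidem e) (hZrange e)).mpr he
    have := hP.nontrivial_of_not_posDef he
    obtain ⟨f, hf⟩ := exists_ne e
    exact iff_of_true ⟨e, he⟩ <|
      Submodule.finrank_lt_finrank_of_lt (pertSpace_lt_pertSpace_one hZherm hZidem hf.symm hZe)
end
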